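/- Let q be a prime power and let A be a nonempty subset of F_q. If q > (2^{|A|} · |A|)^2, then for every integer n with 1 < n < q and (n-1) dividing (q-1), not every element of F_q can be written as the sum of an element of A and an n-potent element, i.e., A + C_n ≠ F_q. -/

import Mathlib

/-!
For a prime `ℓ` dividing `(q - 1) / (n - 1)` there is a character `χ` of order `ℓ` that is trivial
on the nonzero `n`-potents. If `A + C_n = F_q`, every `x` is either some `-a` or satisfies
`χ (-a - x) = 1` for some `a ∈ A`, so `∑ x, ∏ a, u (-a - x) = 0` for the function
`u = ℓ • 1 - ∑ j < ℓ, χ ^ j`, which vanishes at `0` and on the kernel of `χ`. Expanding the product,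
the principal term is `(ℓ - 1) ^ |A| * (q - |A|)`, and Weil's bound `(|A| - 1) * √q` on the other
character sums contradicts the size of `q`.

Weil's bound is proved by Stepanov's method. A polynomial with high-order vanishing at the points
where `χ ∘ N` takes a given value bounds the character sums over the extensions of even degree `2t`
by `O(q ^ t)`. These sums are negatives of the power sums of the `|A| - 1` reciprocal roots of an
`L`-polynomial, so each of these roots has absolute value at most `√q`, and the sum over `F_q`
itself is bounded by the triangle inequality.
-/

open Polynomial Filter Asymptotics

section HasseDeriv

variable {R : Type*}

theorem pow_dvd_pow_mul_hasseDeriv_mul_pow [CommSemiring R] (f u : R[X]) (N l : ℕ) :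
    f ^ N ∣ f ^ l * hasseDeriv l (u * f ^ N) := by
  induction N generalizing l with
  | zero => simp
  | succ N ih =>
    rw [pow_succ f N, ← mul_assoc, hasseDeriv_mul, Finset.mul_sum]
    refine Finset.dvd_sum fun ⟨a, b⟩ hab => ?_
    obtain rfl : a + b = l := Finset.HasAntidiagonal.mem_antidiagonal.1 hab
    cases b with
    | zero =>
      rw [hasseDeriv_zero', ← mul_assoc]
      exact mul_dvd_mul_right (ih a) f
    | succ b =>
      have hsplit : f ^ (a + (b + 1)) * (hasseDeriv a (u * f ^ N) * hasseDeriv (b + 1) f) =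
          f ^ a * hasseDeriv a (u * f ^ N) * f * (f ^ b * hasseDeriv (b + 1) f) := by ring
      rw [hsplit]
      exact (mul_dvd_mul_right (ih a) f).mul_right _

theorem exists_linearMap_pow_mul_hasseDeriv_mul_pow [CommRing R] [IsDomain R] {f : R[X]}
    (hf : f ≠ 0) (N l : ℕ) :
    ∃ V : R[X] →ₗ[R] R[X], ∀ u, f ^ l * hasseDeriv l (u * f ^ N) = f ^ N * V u ∧
      (V u).natDegree ≤ u.natDegree + l * f.natDegree := by
  have hfN : f ^ N ≠ 0 := pow_ne_zero N hf
  let numerator : R[X] →ₗ[R] R[X] :=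
    LinearMap.mulLeft R (f ^ l) ∘ₗ hasseDeriv l ∘ₗ LinearMap.mulRight R (f ^ N)
  have hmem (u : R[X]) : numerator u ∈ LinearMap.range (LinearMap.mulLeft R (f ^ N)) :=
    let ⟨v, hv⟩ := pow_dvd_pow_mul_hasseDeriv_mul_pow f u N l
    ⟨v, hv.symm⟩
  let divide := LinearEquiv.ofInjective (LinearMap.mulLeft R (f ^ N)) (mul_right_injective₀ hfN)
  refine ⟨divide.symm.toLinearMap ∘ₗ numerator.codRestrict _ hmem, fun u => ?_⟩
  set v := (divide.symm.toLinearMap ∘ₗ numerator.codRestrict _ hmem) u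
  have hv : f ^ l * hasseDeriv l (u * f ^ N) = f ^ N * v :=
    congrArg Subtype.val (divide.apply_symm_apply ⟨numerator u, hmem u⟩).symm
  refine ⟨hv, ?_⟩
  rcases eq_or_ne v 0 with hv0 | hv0
  · simp [hv0]
  have hdeg := congrArg natDegree hv
  have hnum : (f ^ l * hasseDeriv l (u * f ^ N)).natDegree ≤
      l * f.natDegree + (u.natDegree + N * f.natDegree) :=
    natDegree_mul_le.trans <| add_le_add natDegree_pow_le <|
      (natDegree_hasseDeriv_le _ _).trans <| (Nat.sub_le _ _).trans <|
        natDegree_mul_le.trans <| by gcongr; exact natDegree_pow_le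
  rw [natDegree_mul hfN hv0, natDegree_pow] at hdeg
  lia

theorem X_sub_C_pow_dvd_of_hasseDeriv_eval_eq_zero [CommRing R] {h : R[X]} {x : R} {M : ℕ}
    (H : ∀ l < M, (hasseDeriv l h).eval x = 0) : (X - C x) ^ M ∣ h := by
  rw [X_sub_C_pow_dvd_iff, X_pow_dvd_iff]
  intro d hd
  rw [← taylor_apply, taylor_coeff, H d hd]

theorem card_mul_le_natDegree_of_X_sub_C_pow_dvd {K : Type*} [Field K] {h : K[X]} (hh : h ≠ 0)
    {T : Finset K} {M : ℕ} (H : ∀ x ∈ T, (X - C x) ^ M ∣ h) : T.card * M ≤ h.natDegree := by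
  have hprod : ∏ x ∈ T, (X - C x) ^ M ∣ h :=
    Finset.prod_dvd_of_coprime
      (fun x _ y _ hxy => (pairwise_coprime_X_sub_C Function.injective_id hxy).pow) H
  have hdeg := natDegree_le_of_dvd hprod hh
  rw [natDegree_prod_of_monic _ _ fun x _ => (monic_X_sub_C x).pow M] at hdeg
  simpa using hdeg

theorem X_sub_C_pow_dvd_X_pow_sub_C {K : Type*} [Field K] [Fintype K] (x : K) {M : ℕ}
    (hM : M ≤ Fintype.card K) (j : ℕ) :
    (X - C x) ^ M ∣ X ^ (j * Fintype.card K) - C (x ^ j) := by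
  have hfrob : (X - C x) ^ Fintype.card K = X ^ Fintype.card K - C x := by
    have := map_sub (FiniteField.frobeniusAlgHom K K[X]) X (C x)
    simpa [← C_pow, FiniteField.pow_card] using this
  calc (X - C x) ^ M ∣ (X - C x) ^ Fintype.card K := pow_dvd_pow _ hM
    _ = X ^ Fintype.card K - C x := hfrob
    _ ∣ (X ^ Fintype.card K) ^ j - C x ^ j := sub_dvd_pow_sub_pow _ _ j
    _ = X ^ (j * Fintype.card K) - C (x ^ j) := by rw [← pow_mul, mul_comm, C_pow]

end HasseDeriv

section Stepanov

theorem sum_ne_zero_of_injOn_natTrailingDegree {R ι : Type*} [Semiring R] {s : Finset ι}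
    {p : ι → R[X]} (h0 : ∃ i ∈ s, p i ≠ 0)
    (hinj : ∀ i ∈ s, ∀ j ∈ s, p i ≠ 0 → p j ≠ 0 →
      (p i).natTrailingDegree = (p j).natTrailingDegree → i = j) :
    ∑ i ∈ s, p i ≠ 0 := by
  classical
  obtain ⟨i₀, hi₀, hp₀⟩ := h0
  obtain ⟨i, hi, hmin⟩ := (s.filter (p · ≠ 0)).exists_min_image
    (fun i => (p i).natTrailingDegree) ⟨i₀, by simp [hi₀, hp₀]⟩
  rw [Finset.mem_filter] at hi
  suffices hcoeff : (∑ i ∈ s, p i).coeff (p i).natTrailingDegree ≠ 0 from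
    fun h => hcoeff (by rw [h, coeff_zero])
  rw [finsetSum_coeff, Finset.sum_eq_single_of_mem i hi.1]
  · exact coeff_natTrailingDegree_ne_zero.2 hi.2
  · intro j hj hji
    by_cases hpj : p j = 0
    · rw [hpj, coeff_zero]
    · exact coeff_eq_zero_of_lt_natTrailingDegree <| (hmin j (by simp [hj, hpj])).lt_of_ne
        fun h => hji (hinj i hi.1 j hj hi.2 hpj h).symm

theorem natTrailingDegree_pow_of_ne_zero {R : Type*} [Semiring R] [NoZeroDivisors R] {f : R[X]}
    (hf : f ≠ 0) (n : ℕ) : (f ^ n).natTrailingDegree = n * f.natTrailingDegree := by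
  have : Nontrivial R := nontrivial_iff.1 ⟨f, 0, hf⟩
  induction n with
  | zero => simp
  | succ n ih => rw [pow_succ, natTrailingDegree_mul (pow_ne_zero _ hf) hf, ih, add_one_mul]

theorem eq_and_eq_of_add_mul_add_mul_eq {ℓ m e Q B v v' i i' j j' : ℕ} (hcop : ℓ.Coprime e)
    (hm : ℓ * m + 1 = Q) (hB : ℓ * B + ℓ * e ≤ Q) (hv : v < B) (hv' : v' < B)
    (hi : i < ℓ) (hi' : i' < ℓ) (h : v + j * Q + m * i * e = v' + j' * Q + m * i' * e) :
    i = i' ∧ j = j' := by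
  have hℓ : 0 < ℓ := by lia
  -- Since `ℓ m = Q - 1`, multiplying by `ℓ` turns `m i e` into `Q i e - i e`.
  have hdivision {v i : ℕ} (j : ℕ) (hi : i < ℓ) : ℓ * (v + j * Q + m * i * e) + ℓ * e =
      (ℓ * v + (ℓ - i) * e) + Q * (ℓ * j + i * e) := by
    obtain ⟨c, rfl⟩ := Nat.exists_eq_add_of_le hi.le
    rw [← hm, Nat.add_sub_cancel_left]
    ring
  have hremainder {v i : ℕ} (hv : v < B) : ℓ * v + (ℓ - i) * e < Q :=
    calc ℓ * v + (ℓ - i) * e < ℓ * B + ℓ * e :=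
          add_lt_add_of_lt_of_le (by gcongr) (by gcongr; exact Nat.sub_le _ _)
      _ ≤ Q := hB
  have hquotient : ℓ * j + i * e = ℓ * j' + i' * e := by
    have heq := congrArg (fun N => (ℓ * N + ℓ * e) / Q) h
    have hQ : 0 < Q := by lia
    simpa only [hdivision _ hi, hdivision _ hi', Nat.add_mul_div_left _ _ hQ,
      Nat.div_eq_of_lt (hremainder hv), Nat.div_eq_of_lt (hremainder hv'), zero_add] using heq
  have hii : i = i' := by
    have hmod : i * e ≡ i' * e [MOD ℓ] := by
      simpa only [Nat.ModEq, Nat.mul_add_mod] using congrArg (· % ℓ) hquotient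
    exact (hmod.cancel_right_of_coprime hcop).eq_of_lt_of_lt hi hi'
  subst hii
  exact ⟨rfl, Nat.eq_of_mul_eq_mul_left hℓ (Nat.add_right_cancel hquotient)⟩

theorem exists_ne_zero_forall_eq_zero_of_mul_lt_finrank {K E : Type*} [Field K] [AddCommGroup E]
    [Module K E] {M R : ℕ} (P : Fin M → E →ₗ[K] K[X]) (hP : ∀ l e, P l e ∈ degreeLT K R)
    (hrank : M * R < Module.finrank K E) : ∃ e ≠ 0, ∀ l, P l e = 0 := by
  have : Module.Finite K E := Module.finite_of_finrank_pos (by lia)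
  have : Module.Finite K (degreeLT K R) := Module.Finite.equiv (degreeLTEquiv K R).symm
  let Φ : E →ₗ[K] (Fin M → degreeLT K R) := LinearMap.pi fun l => (P l).codRestrict _ (hP l)
  have hΦ : Module.finrank K (Fin M → degreeLT K R) < Module.finrank K E := by
    simpa [Module.finrank_pi_fintype, (degreeLTEquiv K R).finrank_eq] using hrank
  obtain ⟨e, he, he0⟩ := (Submodule.ne_bot_iff _).1 (Φ.ker_ne_bot_of_finrank_lt hΦ)
  exact ⟨e, he0, fun l => congrArg Subtype.val (congrFun (LinearMap.mem_ker.1 he) l)⟩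

variable {K : Type*} [Field K]

/-- The auxiliary polynomial of Stepanov's method. With `Q` the cardinality of `K`, the factor
`X ^ (j * Q)` agrees with the constant `x ^ j` to order `Q` at every `x : K`, which makes it cheap
to prescribe zeros of high multiplicity. -/
noncomputable def stepanovPoly (f : K[X]) (m Q : ℕ) {ℓ J B : ℕ}
    (r : Fin ℓ × Fin J → degreeLT K B) : K[X] :=
  ∑ ij : Fin ℓ × Fin J, X ^ ((ij.2 : ℕ) * Q) * ((r ij : K[X]) * f ^ (m * (ij.1 : ℕ)))

theorem natDegree_lt_of_mem_degreeLT {p : K[X]} {B : ℕ} (hp : p ∈ degreeLT K B) (h0 : p ≠ 0) :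
    p.natDegree < B :=
  (natDegree_lt_iff_degree_lt h0).2 (mem_degreeLT.1 hp)

theorem stepanovPoly_ne_zero {f : K[X]} (hf : f ≠ 0) {Q ℓ m B J : ℕ}
    (hcop : ℓ.Coprime f.natTrailingDegree) (hm : ℓ * m + 1 = Q)
    (hB : ℓ * B + ℓ * f.natTrailingDegree ≤ Q)
    {r : Fin ℓ × Fin J → degreeLT K B} (hr : r ≠ 0) : stepanovPoly f m Q r ≠ 0 := by
  have hterm (ij : Fin ℓ × Fin J) :
      X ^ ((ij.2 : ℕ) * Q) * ((r ij : K[X]) * f ^ (m * (ij.1 : ℕ))) ≠ 0 ↔ (r ij : K[X]) ≠ 0 := by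
    simp [hf, X_ne_zero]
  have htrailing (ij : Fin ℓ × Fin J) (h : (r ij : K[X]) ≠ 0) :
      (X ^ ((ij.2 : ℕ) * Q) * ((r ij : K[X]) * f ^ (m * (ij.1 : ℕ)))).natTrailingDegree =
        (r ij : K[X]).natTrailingDegree + ij.2 * Q + m * ij.1 * f.natTrailingDegree := by
    rw [X_pow_mul, natTrailingDegree_mul_X_pow (mul_ne_zero h (pow_ne_zero _ hf)),
      natTrailingDegree_mul h (pow_ne_zero _ hf), natTrailingDegree_pow_of_ne_zero hf]
    ring
  have hlt (ij : Fin ℓ × Fin J) (h : (r ij : K[X]) ≠ 0) : (r ij : K[X]).natTrailingDegree < B :=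
    (natTrailingDegree_le_natDegree _).trans_lt (natDegree_lt_of_mem_degreeLT (r ij).2 h)
  obtain ⟨ij, hij⟩ := Function.ne_iff.1 hr
  refine sum_ne_zero_of_injOn_natTrailingDegree
    ⟨ij, Finset.mem_univ _, (hterm ij).2 fun h => hij (Subtype.ext h)⟩ fun a _ b _ ha hb hab => ?_
  rw [hterm] at ha hb
  rw [htrailing a ha, htrailing b hb] at hab
  obtain ⟨h₁, h₂⟩ := eq_and_eq_of_add_mul_add_mul_eq hcop hm hB (hlt a ha) (hlt b hb)
    a.1.2 b.1.2 hab
  exact Prod.ext (Fin.ext h₁) (Fin.ext h₂)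

theorem natDegree_stepanovPoly_le (f : K[X]) {Q ℓ m B J : ℕ} (hm : ℓ * m ≤ Q)
    (r : Fin ℓ × Fin J → degreeLT K B) :
    (stepanovPoly f m Q r).natDegree ≤ B + (J + f.natDegree) * Q := by
  refine natDegree_sum_le_of_forall_le _ _ fun ij _ => ?_
  have hX : ((X : K[X]) ^ ((ij.2 : ℕ) * Q)).natDegree ≤ J * Q :=
    (natDegree_X_pow_le _).trans (by gcongr; exact ij.2.2.le)
  have hr : (r ij : K[X]).natDegree ≤ B := by
    by_cases h0 : (r ij : K[X]) = 0
    · simp [h0]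
    · exact (natDegree_lt_of_mem_degreeLT (r ij).2 h0).le
  have hpow : (f ^ (m * (ij.1 : ℕ))).natDegree ≤ f.natDegree * Q :=
    calc (f ^ (m * (ij.1 : ℕ))).natDegree ≤ m * ij.1 * f.natDegree := natDegree_pow_le
      _ ≤ m * ℓ * f.natDegree := by gcongr; exact ij.1.2.le
      _ ≤ f.natDegree * Q := by rw [mul_comm, mul_comm m]; gcongr
  calc _ ≤ J * Q + (B + f.natDegree * Q) :=
        natDegree_mul_le.trans (add_le_add hX (natDegree_mul_le.trans (add_le_add hr hpow)))
    _ = B + (J + f.natDegree) * Q := by ring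

variable [Fintype K]

theorem X_sub_C_pow_dvd_stepanovPoly {f : K[X]} {m ℓ B J M : ℕ} (hM : M ≤ Fintype.card K)
    {V : ℕ → ℕ → K[X] → K[X]}
    (hV : ∀ i l u, f ^ l * hasseDeriv l (u * f ^ (m * i)) = f ^ (m * i) * V i l u)
    {ω : K} {r : Fin ℓ × Fin J → degreeLT K B}
    (hr : ∀ l < M, ∑ ij : Fin ℓ × Fin J,
      C (ω ^ (ij.1 : ℕ)) * X ^ (ij.2 : ℕ) * V ij.1 l (r ij) = 0)
    {x : K} (hx : f.eval x ≠ 0) (hxω : f.eval x ^ m = ω) :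
    (X - C x) ^ M ∣ stepanovPoly f m (Fintype.card K) r := by
  set g : K[X] :=
    ∑ ij : Fin ℓ × Fin J, C (x ^ (ij.2 : ℕ)) * ((r ij : K[X]) * f ^ (m * (ij.1 : ℕ)))
  have hcongr : (X - C x) ^ M ∣ stepanovPoly f m (Fintype.card K) r - g := by
    simp_rw [stepanovPoly, g, ← Finset.sum_sub_distrib, ← sub_mul]
    exact Finset.dvd_sum fun ij _ => (X_sub_C_pow_dvd_X_pow_sub_C x hM _).mul_right _
  refine (dvd_iff_dvd_of_dvd_sub hcongr).2 <|
    X_sub_C_pow_dvd_of_hasseDeriv_eval_eq_zero fun l hl => ?_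
  have hterm (ij : Fin ℓ × Fin J) :
      f.eval x ^ l *
        (hasseDeriv l (C (x ^ (ij.2 : ℕ)) * ((r ij : K[X]) * f ^ (m * (ij.1 : ℕ))))).eval x =
      (C (ω ^ (ij.1 : ℕ)) * X ^ (ij.2 : ℕ) * V ij.1 l (r ij)).eval x := by
    have hVx := congrArg (eval x) (hV ij.1 l (r ij))
    simp only [eval_mul, eval_pow, pow_mul _ m, hxω] at hVx
    simp only [C_mul', map_smul, eval_smul, smul_eq_mul, eval_mul, eval_pow, eval_X,
      mul_left_comm _ (x ^ _), pow_mul _ m, hVx]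
    ring
  refine (mul_eq_zero.1 ?_).resolve_left (pow_ne_zero l hx)
  rw [map_sum, eval_finsetSum, Finset.mul_sum, Finset.sum_congr rfl fun ij _ => hterm ij,
    ← eval_finsetSum, hr l hl, eval_zero]

theorem exists_stepanovPoly_dvd {f : K[X]} (hf : f ≠ 0) (m : ℕ) {ℓ B J M : ℕ}
    (hM : M ≤ Fintype.card K) (hrank : M * (B + M * f.natDegree + J) < ℓ * J * B) (ω : K) :
    ∃ r : Fin ℓ × Fin J → degreeLT K B, r ≠ 0 ∧ ∀ x, f.eval x ≠ 0 → f.eval x ^ m = ω →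
      (X - C x) ^ M ∣ stepanovPoly f m (Fintype.card K) r := by
  choose V hV hVdeg using fun i l : ℕ => exists_linearMap_pow_mul_hasseDeriv_mul_pow hf (m * i) l
  let P (l : Fin M) : (Fin ℓ × Fin J → degreeLT K B) →ₗ[K] K[X] :=
    ∑ ij : Fin ℓ × Fin J, LinearMap.mulLeft K (C (ω ^ (ij.1 : ℕ)) * X ^ (ij.2 : ℕ)) ∘ₗ
      V ij.1 l ∘ₗ (degreeLT K B).subtype ∘ₗ LinearMap.proj ij
  have hP (l : Fin M) (r : Fin ℓ × Fin J → degreeLT K B) : P l r =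
      ∑ ij : Fin ℓ × Fin J, C (ω ^ (ij.1 : ℕ)) * X ^ (ij.2 : ℕ) * V ij.1 l (r ij) := by
    simp [P, mul_assoc]
  have hPdeg (l : Fin M) (r : Fin ℓ × Fin J → degreeLT K B) :
      P l r ∈ degreeLT K (B + M * f.natDegree + J) := by
    rw [hP]
    refine Submodule.sum_mem _ fun ij _ => ?_
    by_cases h0 : (r ij : K[X]) = 0
    · rw [h0, map_zero, mul_zero]
      exact Submodule.zero_mem _
    have hrB := natDegree_lt_of_mem_degreeLT (r ij).2 h0
    have hVr := hVdeg ij.1 l (r ij)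
    have hX : (C (ω ^ (ij.1 : ℕ)) * X ^ (ij.2 : ℕ) : K[X]).natDegree ≤ ij.2 :=
      natDegree_C_mul_X_pow_le _ _
    have hlM : l * f.natDegree ≤ M * f.natDegree := by gcongr; exact l.2.le
    have hJ := ij.2.2
    refine mem_degreeLT.2 <|
      degree_le_natDegree.trans_lt (Nat.cast_lt.2 (natDegree_mul_le.trans_lt ?_))
    lia
  obtain ⟨r, hr0, hr⟩ := exists_ne_zero_forall_eq_zero_of_mul_lt_finrank P hPdeg (by
    simpa [Module.finrank_pi_fintype, (degreeLTEquiv K B).finrank_eq] using hrank)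
  exact ⟨r, hr0, fun x => X_sub_C_pow_dvd_stepanovPoly hM hV fun l hl => by
    rw [← hP ⟨l, hl⟩, hr]⟩

theorem stepanov_dimension_lt {ℓ B D s : ℕ} (hℓ : 0 < ℓ) (hm : ℓ * (B + D) + 1 = s ^ 2)
    (hs : 4 * (ℓ * (ℓ * D + 1)) ≤ s) :
    ℓ * s * (B + ℓ * s * D + (s + 2 * (ℓ * (ℓ * D + 1)))) <
      ℓ * (s + 2 * (ℓ * (ℓ * D + 1))) * B := by
  obtain ⟨a, ha⟩ : ∃ a, a = ℓ * D + 1 := ⟨_, rfl⟩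
  rw [← ha] at hs ⊢
  have hlB : ℓ * B + a = s ^ 2 := by rw [← hm, ha]; ring
  have ha_le : a ≤ ℓ * a := Nat.le_mul_of_pos_left a hℓ
  have hcount : 2 * (ℓ * a) * s + 2 * a ^ 2 < a * s ^ 2 := by
    have h₁ : 4 * (ℓ * a) * s ≤ a * s ^ 2 :=
      calc 4 * (ℓ * a) * s ≤ s * s := by gcongr
        _ ≤ a * s ^ 2 := by rw [← sq]; exact Nat.le_mul_of_pos_left _ (by lia)
    have h₂ : 4 * a ^ 2 < a * s ^ 2 := by nlinarith
    lia
  have hsub : s * (ℓ * s * D + (s + 2 * (ℓ * a))) < 2 * (ℓ * a) * B :=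
    calc s * (ℓ * s * D + (s + 2 * (ℓ * a))) = a * s ^ 2 + 2 * (ℓ * a) * s := by rw [ha]; ring
      _ < 2 * (ℓ * a) * B := by nlinarith
  calc _ = ℓ * (s * B + s * (ℓ * s * D + (s + 2 * (ℓ * a)))) := by ring
    _ < ℓ * (s * B + 2 * (ℓ * a) * B) := by gcongr
    _ = _ := by ring

theorem add_one_le_mul_mul_add_one {ℓ : ℕ} (hℓ : 0 < ℓ) (D : ℕ) : D + 1 ≤ ℓ * (ℓ * D + 1) :=
  calc D + 1 ≤ ℓ * D + 1 := by gcongr; exact Nat.le_mul_of_pos_left D hℓ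
    _ ≤ ℓ * (ℓ * D + 1) := Nat.le_mul_of_pos_left _ hℓ

theorem card_le_of_forall_eval_pow_eq {f : K[X]} (hf : f ≠ 0) {ℓ m s : ℕ} (hℓ : 0 < ℓ)
    (hcop : ℓ.Coprime f.natTrailingDegree) (hm : ℓ * m + 1 = Fintype.card K)
    (hK : Fintype.card K = s ^ 2) (hs : 4 * (ℓ * (ℓ * f.natDegree + 1)) ≤ s)
    {ω : K} {T : Finset K} (hT : ∀ x ∈ T, f.eval x ≠ 0 ∧ f.eval x ^ m = ω) :
    ℓ * T.card ≤ s ^ 2 + 3 * (ℓ * (ℓ * f.natDegree + 1)) * s := by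
  obtain ⟨D, hD⟩ : ∃ D, D = f.natDegree := ⟨_, rfl⟩
  obtain ⟨E, hE⟩ : ∃ E, E = ℓ * (ℓ * D + 1) := ⟨_, rfl⟩
  have hDE : D + 1 ≤ E := hE ▸ add_one_le_mul_mul_add_one hℓ D
  have hℓE : ℓ ≤ E := hE ▸ Nat.le_mul_of_pos_right ℓ (by lia)
  rw [← hD, ← hE] at hs ⊢
  obtain ⟨B, rfl⟩ : ∃ B, m = B + D := by
    refine Nat.exists_eq_add_of_le' (Nat.le_of_mul_le_mul_left ?_ hℓ)
    nlinarith
  have htrailing : f.natTrailingDegree ≤ D := hD ▸ natTrailingDegree_le_natDegree f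
  obtain ⟨r, hr0, hr⟩ := exists_stepanovPoly_dvd (ℓ := ℓ) (M := ℓ * s) (J := s + 2 * E)
    (B := B) hf (B + D) (by rw [hK, sq]; gcongr; lia)
    (by rw [← hD, hE]; exact stepanov_dimension_lt hℓ (hm.trans hK) (hE ▸ hs)) ω
  have hne := stepanovPoly_ne_zero hf hcop hm (by rw [← hm]; nlinarith) hr0
  have hzeros : T.card * (ℓ * s) ≤ B + (s + 2 * E + D) * s ^ 2 := by
    rw [hD, ← hK]
    exact (card_mul_le_natDegree_of_X_sub_C_pow_dvd hne fun x hx =>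
      hr x (hT x hx).1 (hT x hx).2).trans (natDegree_stepanovPoly_le f (by lia) r)
  refine Nat.le_of_mul_le_mul_right (c := s) ?_ (by lia)
  have hB : B ≤ s ^ 2 := by nlinarith
  calc ℓ * T.card * s = T.card * (ℓ * s) := by ring
    _ ≤ (s + 2 * E + (D + 1)) * s ^ 2 := by linarith
    _ ≤ (s + 2 * E + E) * s ^ 2 := by gcongr
    _ = (s ^ 2 + 3 * E * s) * s := by ring

theorem sum_nthRootsFinset_one_eq_zero {R : Type*} [CommRing R] [IsDomain R] {ζ : R} {n : ℕ}
    (hζ : IsPrimitiveRoot ζ n) (hn : 1 < n) : ∑ z ∈ nthRootsFinset n (1 : R), z = 0 := by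
  have hmul : ζ * ∑ z ∈ nthRootsFinset n (1 : R), z = ∑ z ∈ nthRootsFinset n (1 : R), z := by
    rw [Finset.mul_sum]
    have hmaps : ∀ z ∈ nthRootsFinset n (1 : R), ζ * z ∈ nthRootsFinset n (1 : R) := fun z hz => by
      simpa using mul_mem_nthRootsFinset (hζ.mem_nthRootsFinset (by lia)) hz
    have hinj := (mul_right_injective₀ (hζ.ne_zero (by lia))).injOn
      (s := SetLike.coe (nthRootsFinset n (1 : R)))
    exact Finset.sum_nbij (ζ * ·) hmaps hinj
      (Finset.surjOn_of_injOn_of_card_le _ hmaps hinj le_rfl) fun _ _ => rfl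
  have hsub : (ζ - 1) * ∑ z ∈ nthRootsFinset n (1 : R), z = 0 := by rw [sub_one_mul, hmul, sub_self]
  exact (mul_eq_zero.1 hsub).resolve_left (sub_ne_zero.2 (hζ.ne_one hn))

theorem norm_sum_smul_le_of_sum_eq_zero {ι E : Type*} [SeminormedAddCommGroup E]
    [NormedSpace ℝ E] {s : Finset ι} {z : ι → E} (hz : ∑ i ∈ s, z i = 0)
    (hz1 : ∀ i ∈ s, ‖z i‖ ≤ 1) {N : ι → ℝ} {u : ℝ} (hN : ∀ i ∈ s, N i ≤ u) :
    ‖∑ i ∈ s, N i • z i‖ ≤ s.card * u - ∑ i ∈ s, N i := by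
  have hsum : ∑ i ∈ s, N i • z i = -∑ i ∈ s, (u - N i) • z i := by
    simp [sub_smul, ← Finset.smul_sum, hz]
  rw [hsum, norm_neg]
  calc ‖∑ i ∈ s, (u - N i) • z i‖ ≤ ∑ i ∈ s, (u - N i) := by
        refine norm_sum_le_of_le _ fun i hi => ?_
        have hnonneg : 0 ≤ u - N i := sub_nonneg.2 (hN i hi)
        rw [norm_smul, Real.norm_of_nonneg hnonneg]
        exact mul_le_of_le_one_right hnonneg (hz1 i hi)
    _ = s.card * u - ∑ i ∈ s, N i := by simp

end Stepanov

section MulChar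

variable {K R : Type*} [Field K] [CommRing R]

section Finite

variable [Finite K]

theorem mulChar_apply_pow_orderOf (χ : MulChar K R) {y : K} (hy : y ≠ 0) :
    χ y ^ orderOf χ = 1 := by
  rw [← MulChar.pow_apply' χ χ.orderOf_pos.ne', pow_orderOf_eq_one, MulChar.one_apply hy.isUnit]

theorem orderOf_mulChar_apply_of_forall_mem_zpowers (χ : MulChar K R) {g : Kˣ}
    (hg : ∀ y, y ∈ Subgroup.zpowers g) : orderOf (χ g) = orderOf χ := by
  refine Nat.dvd_antisymm (orderOf_dvd_of_pow_eq_one (mulChar_apply_pow_orderOf χ g.ne_zero)) <|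
    orderOf_dvd_of_pow_eq_one ((MulChar.eq_iff hg _ _).2 ?_)
  rw [MulChar.pow_apply_coe, pow_orderOf_eq_one, MulChar.one_apply_coe]

theorem sum_filter_ne_zero_mulChar_eq_sum_nthRootsFinset [IsDomain R] {α M : Type*} [Fintype α]
    [AddCommMonoid M] [DecidableEq K] [DecidableEq R] (χ : MulChar K R) (g : α → K) (φ : R → M) :
    ∑ x with g x ≠ 0, φ (χ (g x)) =
      ∑ z ∈ nthRootsFinset (orderOf χ) (1 : R),
        (Finset.univ.filter fun x => χ (g x) = z).card • φ z := by
  have hmaps : ∀ x ∈ Finset.univ.filter (g · ≠ 0),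
      χ (g x) ∈ nthRootsFinset (orderOf χ) (1 : R) := fun x hx =>
    (mem_nthRootsFinset χ.orderOf_pos _).2 (mulChar_apply_pow_orderOf χ (Finset.mem_filter.1 hx).2)
  rw [← Finset.sum_fiberwise_of_maps_to hmaps]
  refine Finset.sum_congr rfl fun z hz => ?_
  have hfiber : (Finset.univ.filter (g · ≠ 0)).filter (fun x => χ (g x) = z) =
      Finset.univ.filter (fun x => χ (g x) = z) := by
    rw [Finset.filter_filter]
    refine Finset.filter_congr fun x _ => and_iff_right_of_imp fun hx h0 => ?_
    rw [h0, MulChar.map_zero] at hx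
    exact ne_zero_of_mem_nthRootsFinset one_ne_zero hz hx.symm
  rw [hfiber, ← Finset.sum_const]
  exact Finset.sum_congr rfl fun x hx => by rw [(Finset.mem_filter.1 hx).2]

end Finite

variable [Fintype K]

theorem mulChar_apply_eq_one_iff [IsDomain R] (χ : MulChar K R) {y : K} (hy : y ≠ 0) :
    χ y = 1 ↔ y ^ ((Fintype.card K - 1) / orderOf χ) = 1 := by
  classical
  obtain ⟨g, hg⟩ := IsCyclic.exists_generator (α := Kˣ)
  obtain ⟨i, hi⟩ := mem_powers_iff_mem_zpowers.2 (hg (Units.mk0 y hy))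
  obtain rfl : (g : K) ^ i = y := by simpa using congrArg Units.val hi
  obtain ⟨c, hc⟩ := χ.orderOf_dvd_card_sub_one
  have hc0 : 0 < c := Nat.pos_of_ne_zero fun h => by
    have := Fintype.one_lt_card (α := K)
    rw [h, mul_zero] at hc
    lia
  have hg_order : orderOf (g : K) = orderOf χ * c := by
    rw [orderOf_units, orderOf_eq_card_of_forall_mem_zpowers hg, Nat.card_eq_fintype_card,
      Fintype.card_units, hc]
  rw [map_pow, ← orderOf_dvd_iff_pow_eq_one, orderOf_mulChar_apply_of_forall_mem_zpowers χ hg, hc,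
    Nat.mul_div_cancel_left _ χ.orderOf_pos, ← pow_mul, ← orderOf_dvd_iff_pow_eq_one, hg_order,
    Nat.mul_dvd_mul_iff_right hc0]

theorem mulChar_apply_eq_apply_iff [IsDomain R] (χ : MulChar K R) {y z : K} (hy : y ≠ 0)
    (hz : z ≠ 0) : χ y = χ z ↔
      y ^ ((Fintype.card K - 1) / orderOf χ) = z ^ ((Fintype.card K - 1) / orderOf χ) := by
  have hχz : χ z ≠ 0 := (hz.isUnit.map χ).ne_zero
  have hmul : χ y = χ (y / z) * χ z := by rw [← map_mul, div_mul_cancel₀ y hz]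
  rw [hmul, mul_eq_right₀ hχz, mulChar_apply_eq_one_iff χ (div_ne_zero hy hz), div_pow,
    div_eq_one_iff_eq (pow_ne_zero _ hz)]

end MulChar

section StepanovBound

variable {K : Type*} [Field K] [Fintype K] {ψ : MulChar K ℂ} {f : K[X]} {s : ℕ}

theorem card_filter_mulChar_eval_eq_le (hf : f ≠ 0)
    (hcop : (orderOf ψ).Coprime f.natTrailingDegree) (hK : Fintype.card K = s ^ 2)
    (hs : 4 * (orderOf ψ * (orderOf ψ * f.natDegree + 1)) ≤ s) {z : ℂ} (hz : z ≠ 0) :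
    orderOf ψ * (Finset.univ.filter fun x => ψ (f.eval x) = z).card ≤
      s ^ 2 + 3 * (orderOf ψ * (orderOf ψ * f.natDegree + 1)) * s := by
  rcases (Finset.univ.filter fun x => ψ (f.eval x) = z).eq_empty_or_nonempty with h | ⟨x₀, hx₀⟩
  · simp [h]
  have hne {x : K} (hx : ψ (f.eval x) = z) : f.eval x ≠ 0 := fun h0 =>
    hz (by rw [← hx, h0, MulChar.map_zero])
  replace hx₀ := (Finset.mem_filter.1 hx₀).2
  have hm : orderOf ψ * ((Fintype.card K - 1) / orderOf ψ) + 1 = Fintype.card K := by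
    rw [Nat.mul_div_cancel' ψ.orderOf_dvd_card_sub_one, Nat.sub_add_cancel Fintype.card_pos]
  refine card_le_of_forall_eval_pow_eq hf ψ.orderOf_pos hcop hm hK hs
    (ω := f.eval x₀ ^ ((Fintype.card K - 1) / orderOf ψ)) fun x hx => ?_
  replace hx := (Finset.mem_filter.1 hx).2
  exact ⟨hne hx, (mulChar_apply_eq_apply_iff ψ (hne hx) (hne hx₀)).1 (hx.trans hx₀.symm)⟩

theorem card_le_card_filter_eval_ne_zero_add_natDegree [DecidableEq K] (hf : f ≠ 0) :
    Fintype.card K ≤ (Finset.univ.filter (f.eval · ≠ 0)).card + f.natDegree := by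
  have hroots : (Finset.univ.filter (f.eval · = 0)).card ≤ f.natDegree :=
    (Finset.card_le_card fun x hx => by simpa [hf] using hx).trans
      ((Multiset.toFinset_card_le f.roots).trans (card_roots' f))
  have hsplit := Finset.card_filter_add_card_filter_not (s := (Finset.univ : Finset K))
    (f.eval · = 0)
  rw [Finset.card_univ] at hsplit
  lia

theorem norm_sum_mulChar_eval_le_of_coprime_natTrailingDegree (hψ : ψ ≠ 1) (hf : f ≠ 0)
    (hcop : (orderOf ψ).Coprime f.natTrailingDegree) (hK : Fintype.card K = s ^ 2)
    (hs : 4 * (orderOf ψ * (orderOf ψ * f.natDegree + 1)) ≤ s) :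
    ‖∑ x, ψ (f.eval x)‖ ≤ 4 * (orderOf ψ * (orderOf ψ * f.natDegree + 1)) * s := by
  classical
  set ℓ := orderOf ψ
  set E := ℓ * (ℓ * f.natDegree + 1) with hE
  have hℓ0 : 0 < ℓ := ψ.orderOf_pos
  have hℓ1 : 1 < ℓ := lt_of_le_of_ne hℓ0 fun h => hψ (orderOf_eq_one_iff.1 h.symm)
  have hprim := Complex.isPrimitiveRoot_exp ℓ hℓ0.ne'
  let N (z : ℂ) : ℕ := (Finset.univ.filter fun x => ψ (f.eval x) = z).card
  have hsum : ∑ x, ψ (f.eval x) = ∑ z ∈ nthRootsFinset ℓ (1 : ℂ), (N z : ℝ) • z := by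
    rw [← Finset.sum_filter_of_ne (p := (f.eval · ≠ 0))
      fun x _ h h0 => h (by rw [h0, MulChar.map_zero])]
    simpa [N] using sum_filter_ne_zero_mulChar_eq_sum_nthRootsFinset ψ f.eval id
  have hcard : (s : ℝ) ^ 2 - f.natDegree ≤ ∑ z ∈ nthRootsFinset ℓ (1 : ℂ), (N z : ℝ) := by
    have hcount := sum_filter_ne_zero_mulChar_eq_sum_nthRootsFinset ψ f.eval fun _ => 1
    simp only [smul_eq_mul, mul_one, ← Finset.card_eq_sum_ones] at hcount
    have hle := card_le_card_filter_eval_ne_zero_add_natDegree hf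
    rw [hcount, hK] at hle
    rw [sub_le_iff_le_add]
    exact_mod_cast hle
  have hN : ∀ z ∈ nthRootsFinset ℓ (1 : ℂ), (N z : ℝ) ≤ (s ^ 2 + 3 * E * s) / ℓ := fun z hz => by
    rw [le_div_iff₀' (by positivity)]
    exact_mod_cast card_filter_mulChar_eval_eq_le hf hcop hK hs
      (ne_zero_of_mem_nthRootsFinset one_ne_zero hz)
  have hnorm : ∀ z ∈ nthRootsFinset ℓ (1 : ℂ), ‖z‖ ≤ 1 := fun z hz =>
    (Complex.norm_eq_one_of_pow_eq_one ((mem_nthRootsFinset hℓ0 _).1 hz) hℓ0.ne').le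
  have hbound := norm_sum_smul_le_of_sum_eq_zero (sum_nthRootsFinset_one_eq_zero hprim hℓ1) hnorm hN
  rw [← hsum, hprim.card_nthRootsFinset, mul_div_cancel₀ _ (by positivity)] at hbound
  have hDE : (f.natDegree : ℝ) ≤ E * s := by
    have hs0 : 0 < s :=
      Nat.pos_of_ne_zero fun h => Fintype.card_ne_zero (α := K) (by rw [hK, h]; rfl)
    have hDE' : f.natDegree ≤ E := (Nat.le_succ _).trans (add_one_le_mul_mul_add_one hℓ0 _)
    exact_mod_cast hDE'.trans (Nat.le_mul_of_pos_right E hs0)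
  push_cast [hE] at hbound hDE ⊢
  linarith

theorem norm_sum_mulChar_eval_le (hψ : ψ ≠ 1) (hf : f ≠ 0) (b : K)
    (hcop : (orderOf ψ).Coprime (f.rootMultiplicity b)) (hK : Fintype.card K = s ^ 2)
    (hs : 4 * (orderOf ψ * (orderOf ψ * f.natDegree + 1)) ≤ s) :
    ‖∑ x, ψ (f.eval x)‖ ≤ 4 * (orderOf ψ * (orderOf ψ * f.natDegree + 1)) * s := by
  have hdeg : (f.comp (X + C b)).natDegree = f.natDegree := by
    rw [natDegree_comp, natDegree_X_add_C, mul_one]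
  have htranslate : ∑ x, ψ ((f.comp (X + C b)).eval x) = ∑ x, ψ (f.eval x) := by
    simpa using Equiv.sum_comp (Equiv.addRight b) fun x => ψ (f.eval x)
  rw [← htranslate, ← hdeg]
  refine norm_sum_mulChar_eval_le_of_coprime_natTrailingDegree hψ ?_ ?_ hK (by rwa [hdeg])
  · rwa [Ne, comp_X_add_C_eq_zero_iff]
  · rwa [← rootMultiplicity_eq_natTrailingDegree]

end StepanovBound

section MonicPolynomials

open Finset.HasAntidiagonal (antidiagonal mem_antidiagonal)

variable {F : Type*} [Field F]

open Classical UniqueFactorizationMonoid in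
/-- The analogue of the von Mangoldt function for polynomials: it equals `deg P` at every positive
power of an irreducible polynomial `P`, and vanishes elsewhere. -/
noncomputable def vonMangoldtDegree (g : F[X]) : ℕ :=
  if IsPrimePow g then (radical g).natDegree else 0

open UniqueFactorizationMonoid in
theorem radical_pow_of_irreducible_of_monic [DecidableEq F] {P : F[X]}
    (hP : Irreducible P) (hPm : P.Monic) {n : ℕ} (hn : n ≠ 0) : radical (P ^ n) = P := by
  rw [radical_pow_of_prime hP.prime hn, hPm.normalize_eq_self]

theorem vonMangoldtDegree_pow {P : F[X]} (hP : Irreducible P) (hPm : P.Monic) {n : ℕ}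
    (hn : n ≠ 0) : vonMangoldtDegree (P ^ n) = P.natDegree := by
  classical
  rw [vonMangoldtDegree, if_pos (hP.prime.isPrimePow.pow hn),
    radical_pow_of_irreducible_of_monic hP hPm hn]

theorem exists_irreducible_monic_pow_eq_of_isPrimePow {g : F[X]} (hg : g.Monic)
    (hpow : IsPrimePow g) : ∃ P : F[X], Irreducible P ∧ P.Monic ∧ ∃ n ≠ 0, P ^ n = g := by
  classical
  obtain ⟨Q, n, hQ, hn, rfl⟩ := hpow
  refine ⟨normalize Q, (associated_normalize Q).irreducible hQ.irreducible,
    monic_normalize hQ.ne_zero, n, hn.ne', ?_⟩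
  exact eq_of_monic_of_associated ((monic_normalize hQ.ne_zero).pow n) hg
    (normalize_associated Q).pow_pow

theorem pow_eq_pow_iff_of_irreducible_of_monic {P Q : F[X]} (hP : Irreducible P) (hPm : P.Monic)
    (hQ : Irreducible Q) (hQm : Q.Monic) {m n : ℕ} (hm : m ≠ 0) (hn : n ≠ 0) :
    P ^ m = Q ^ n ↔ P = Q ∧ m = n := by
  classical
  refine ⟨fun h => ?_, fun h => by rw [h.1, h.2]⟩
  obtain rfl : P = Q := by
    rw [← radical_pow_of_irreducible_of_monic hP hPm hm, h,
      radical_pow_of_irreducible_of_monic hQ hQm hn]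
  refine ⟨rfl, ?_⟩
  have hdeg := congrArg natDegree h
  rw [natDegree_pow, natDegree_pow] at hdeg
  exact Nat.eq_of_mul_eq_mul_right hP.natDegree_pos hdeg

open UniqueFactorizationMonoid in
theorem sum_count_normalizedFactors_mul_natDegree [DecidableEq F] {h : F[X]} (hh : h.Monic) :
    ∑ P ∈ (normalizedFactors h).toFinset, (normalizedFactors h).count P * P.natDegree =
      h.natDegree := by
  conv_rhs => rw [← hh.normalize_eq_self, ← prod_normalizedFactors_eq hh.ne_zero,
    natDegree_multiset_prod _ (zero_notMem_normalizedFactors h), Finset.sum_multiset_map_count]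
  simp only [smul_eq_mul]

open UniqueFactorizationMonoid in
theorem pow_dvd_iff_le_count_normalizedFactors [DecidableEq F] {P h : F[X]}
    (hP : Irreducible P) (hPm : P.Monic) (hh : h ≠ 0) {n : ℕ} :
    P ^ n ∣ h ↔ n ≤ (normalizedFactors h).count P := by
  rw [pow_dvd_iff_le_emultiplicity, emultiplicity_eq_count_normalizedFactors hP hh,
    hPm.normalize_eq_self]
  exact_mod_cast Iff.rfl

open UniqueFactorizationMonoid in
theorem irreducible_and_monic_of_mem_normalizedFactors [DecidableEq F] {P h : F[X]}
    (hP : P ∈ normalizedFactors h) : Irreducible P ∧ P.Monic :=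
  have hirr := irreducible_of_normalized_factor P hP
  ⟨hirr, normalize_normalized_factor P hP ▸ monic_normalize hirr.ne_zero⟩

open UniqueFactorizationMonoid in
theorem exists_finset_sigma_mem_iff_pow_dvd {h : F[X]} (hh : h.Monic) :
    ∃ I : Finset (Σ _ : F[X], ℕ), (∀ P n, ⟨P, n⟩ ∈ I ↔
      (Irreducible P ∧ P.Monic) ∧ n ≠ 0 ∧ P ^ n ∣ h) ∧ ∑ p ∈ I, p.1.natDegree = h.natDegree := by
  classical
  refine ⟨(normalizedFactors h).toFinset.sigma
    fun P => Finset.Icc 1 ((normalizedFactors h).count P), fun P n => ?_, ?_⟩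
  · rw [Finset.mem_sigma, Multiset.mem_toFinset, Finset.mem_Icc]
    constructor
    · rintro ⟨hP, hn, hle⟩
      have hP' := irreducible_and_monic_of_mem_normalizedFactors hP
      exact ⟨hP', Nat.pos_iff_ne_zero.1 hn,
        (pow_dvd_iff_le_count_normalizedFactors hP'.1 hP'.2 hh.ne_zero).2 hle⟩
    · rintro ⟨hP, hn, hdvd⟩
      have hle := (pow_dvd_iff_le_count_normalizedFactors hP.1 hP.2 hh.ne_zero).1 hdvd
      exact ⟨Multiset.count_pos.1 ((Nat.pos_iff_ne_zero.2 hn).trans_le hle),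
        Nat.pos_iff_ne_zero.2 hn, hle⟩
  · rw [← sum_count_normalizedFactors_mul_natDegree hh, Finset.sum_sigma]
    simp only [Finset.sum_const, Nat.card_Icc, Nat.add_sub_cancel, smul_eq_mul]

theorem sum_vonMangoldtDegree_of_mem_iff_monic_and_dvd {h : F[X]} (hh : h.Monic)
    {s : Finset F[X]} (hs : ∀ g, g ∈ s ↔ g.Monic ∧ g ∣ h) :
    ∑ g ∈ s, vonMangoldtDegree g = h.natDegree := by
  obtain ⟨I, mem_I, sum_I⟩ := exists_finset_sigma_mem_iff_pow_dvd hh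
  rw [← sum_I]
  refine (Finset.sum_of_injOn (fun p => p.1 ^ p.2) ?_ ?_ ?_ ?_).symm
  · rintro ⟨P, m⟩ hP ⟨Q, n⟩ hQ hPQ
    obtain ⟨⟨hPi, hPm⟩, hm, -⟩ := (mem_I _ _).1 hP
    obtain ⟨⟨hQi, hQm⟩, hn, -⟩ := (mem_I _ _).1 hQ
    obtain ⟨rfl, rfl⟩ :=
      (pow_eq_pow_iff_of_irreducible_of_monic hPi hPm hQi hQm hm hn).1 hPQ
    rfl
  · rintro ⟨P, m⟩ hP
    obtain ⟨⟨-, hPm⟩, -, hdvd⟩ := (mem_I _ _).1 hP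
    exact (hs _).2 ⟨hPm.pow m, hdvd⟩
  · refine fun g hg hgI => if_neg fun hpow => hgI ?_
    obtain ⟨P, hP, hPm, n, hn, rfl⟩ :=
      exists_irreducible_monic_pow_eq_of_isPrimePow ((hs g).1 hg).1 hpow
    exact ⟨⟨P, n⟩, (mem_I _ _).2 ⟨⟨hP, hPm⟩, hn, ((hs _).1 hg).2⟩, rfl⟩
  · rintro ⟨P, m⟩ hP
    obtain ⟨⟨hPi, hPm⟩, hm, -⟩ := (mem_I _ _).1 hP
    exact (vonMangoldtDegree_pow hPi hPm hm).symm

section Finite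

variable [Finite F]

theorem finite_setOf_monic_and_natDegree_eq (n : ℕ) :
    {h : F[X] | h.Monic ∧ h.natDegree = n}.Finite := by
  have : Module.Finite F (degreeLT F (n + 1)) := Module.Finite.equiv (degreeLTEquiv F (n + 1)).symm
  have : Finite (degreeLT F (n + 1)) := Module.finite_of_finite F
  refine (Set.toFinite (degreeLT F (n + 1) : Set F[X])).subset fun h hh => ?_
  rw [SetLike.mem_coe, mem_degreeLT, degree_eq_natDegree hh.1.ne_zero, hh.2]
  exact_mod_cast n.lt_succ_self

variable (F) in
/-- The monic polynomials of degree `n` over a finite field. -/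
noncomputable def monicFinset (n : ℕ) : Finset F[X] :=
  (finite_setOf_monic_and_natDegree_eq (F := F) n).toFinset

theorem mem_monicFinset {n : ℕ} {h : F[X]} :
    h ∈ monicFinset F n ↔ h.Monic ∧ h.natDegree = n := by
  rw [monicFinset, Set.Finite.mem_toFinset, Set.mem_ofPred_eq]

variable (F) in
theorem monicFinset_zero : monicFinset F 0 = {1} := by
  ext h
  rw [mem_monicFinset, Finset.mem_singleton]
  refine ⟨fun hh => hh.1.natDegree_eq_zero.1 hh.2, ?_⟩
  rintro rfl
  exact ⟨monic_one, natDegree_one⟩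

theorem sum_antidiagonal_vonMangoldtDegree {n : ℕ} {h : F[X]} (hh : h ∈ monicFinset F n)
    [DecidablePred (· ∣ h)] :
    ∑ p ∈ antidiagonal n, ∑ g ∈ monicFinset F p.2 with g ∣ h, vonMangoldtDegree g = n := by
  classical
  obtain ⟨hm, hdeg⟩ := mem_monicFinset.1 hh
  rw [← Finset.Nat.sum_antidiagonal_swap, Finset.Nat.sum_antidiagonal_eq_sum_range_succ_mk,
    ← Finset.sum_biUnion, ← hdeg]
  · refine sum_vonMangoldtDegree_of_mem_iff_monic_and_dvd hm fun g => ?_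
    simp only [Finset.mem_biUnion, Finset.mem_range, Finset.mem_filter, mem_monicFinset]
    exact ⟨fun ⟨_, _, hg, hdvd⟩ => ⟨hg.1, hdvd⟩, fun ⟨hg, hdvd⟩ =>
      ⟨_, Nat.lt_succ_of_le (natDegree_le_of_dvd hdvd hm.ne_zero), ⟨hg, rfl⟩, hdvd⟩⟩
  · refine fun i _ j _ hij => Finset.disjoint_left.2 fun g hi hj => hij ?_
    exact (mem_monicFinset.1 (Finset.mem_filter.1 hi).1).2.symm.trans
      (mem_monicFinset.1 (Finset.mem_filter.1 hj).1).2

theorem sum_filter_dvd_monicFinset {R : Type*} [AddCommMonoid R] (Λ : F[X] → R) {i j : ℕ}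
    {g : F[X]} (hg : g ∈ monicFinset F i) [DecidablePred (g ∣ ·)] :
    ∑ h ∈ monicFinset F (i + j) with g ∣ h, Λ h = ∑ h ∈ monicFinset F j, Λ (g * h) := by
  obtain ⟨hgm, hgdeg⟩ := mem_monicFinset.1 hg
  symm
  refine Finset.sum_bij (fun h _ => g * h) (fun h hh => ?_)
    (fun _ _ _ _ hab => mul_left_cancel₀ hgm.ne_zero hab) (fun h hh => ?_) fun _ _ => rfl
  · obtain ⟨hm, hdeg⟩ := mem_monicFinset.1 hh
    exact Finset.mem_filter.2 ⟨mem_monicFinset.2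
      ⟨hgm.mul hm, by rw [hgm.natDegree_mul hm, hgdeg, hdeg]⟩, dvd_mul_right _ _⟩
  · rw [Finset.mem_filter, mem_monicFinset] at hh
    obtain ⟨⟨hm, hdeg⟩, u, rfl⟩ := hh
    have hu : u.Monic := hgm.of_mul_monic_left hm
    rw [hgm.natDegree_mul hu, hgdeg] at hdeg
    exact ⟨u, mem_monicFinset.2 ⟨hu, Nat.add_left_cancel hdeg⟩, rfl⟩

-- The coefficients of `T L'(T) = L(T) (T L'(T) / L(T))` for the Euler product
-- `L(T) = ∑ Λ h T ^ deg h = ∏ (1 - Λ P T ^ deg P)⁻¹`.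
theorem natCast_mul_sum_monicFinset {R : Type*} [CommSemiring R] (Λ : F[X] →* R) (n : ℕ) :
    n * ∑ h ∈ monicFinset F n, Λ h =
      ∑ p ∈ antidiagonal n,
        (∑ h ∈ monicFinset F p.1, Λ h) * ∑ g ∈ monicFinset F p.2, vonMangoldtDegree g * Λ g := by
  classical
  calc n * ∑ h ∈ monicFinset F n, Λ h
      = ∑ h ∈ monicFinset F n, ∑ p ∈ antidiagonal n,
          ∑ g ∈ monicFinset F p.2 with g ∣ h, vonMangoldtDegree g * Λ h := by
        rw [Finset.mul_sum]
        refine Finset.sum_congr rfl fun h hh => ?_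
        conv_lhs => rw [← sum_antidiagonal_vonMangoldtDegree hh]
        simp only [Nat.cast_sum, Finset.sum_mul]
    _ = ∑ p ∈ antidiagonal n, ∑ g ∈ monicFinset F p.2,
          ∑ h ∈ monicFinset F n with g ∣ h, vonMangoldtDegree g * Λ h := by
        rw [Finset.sum_comm]
        refine Finset.sum_congr rfl fun p _ => ?_
        simp only [Finset.sum_filter]
        exact Finset.sum_comm
    _ = _ := by
        refine Finset.sum_congr rfl fun p hp => ?_
        rw [Finset.mul_sum]
        refine Finset.sum_congr rfl fun g hg => ?_
        rw [← mem_antidiagonal.1 hp, add_comm, sum_filter_dvd_monicFinset _ hg, ← Finset.mul_sum]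
        simp only [map_mul, ← Finset.mul_sum]
        ring

end Finite

end MonicPolynomials

section FieldCharpoly

variable {F K : Type*} [Field F] [Field K] [Algebra F K]

variable (F) in
/-- The characteristic polynomial over `F` of the multiplication by `x` on a finite extension `K`
of `F`, written as the power of degree `[K : F]` of the minimal polynomial. -/
noncomputable def fieldCharpoly (x : K) : F[X] :=
  minpoly F x ^ (Module.finrank F K / (minpoly F x).natDegree)

section FiniteDimensional

variable [FiniteDimensional F K]

theorem fieldCharpoly_monic (x : K) : (fieldCharpoly F x).Monic :=
  (minpoly.monic (.of_finite F x)).pow _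

theorem natDegree_fieldCharpoly (x : K) : (fieldCharpoly F x).natDegree = Module.finrank F K := by
  rw [fieldCharpoly, natDegree_pow, Nat.div_mul_cancel (minpoly.degree_dvd (.of_finite F x))]

theorem finrank_div_natDegree_minpoly_ne_zero (x : K) :
    Module.finrank F K / (minpoly F x).natDegree ≠ 0 :=
  (Nat.div_pos (minpoly.natDegree_le x) (minpoly.natDegree_pos (.of_finite F x))).ne'

open IntermediateField in
theorem norm_eq_eval_zero_fieldCharpoly (x : K) :
    Algebra.norm F x = (-1) ^ Module.finrank F K * (fieldCharpoly F x).eval 0 := by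
  have hx : IsIntegral F x := .of_finite F x
  have hgen := Algebra.PowerBasis.norm_gen_eq_coeff_zero_minpoly (adjoin.powerBasis hx)
  rw [adjoin.powerBasis_gen, minpoly_gen, adjoin.powerBasis_dim] at hgen
  have hrank : Module.finrank F⟮x⟯ K = Module.finrank F K / (minpoly F x).natDegree := by
    rw [← adjoin.finrank hx, ← Module.finrank_mul_finrank F F⟮x⟯ K,
      Nat.mul_div_cancel_left _ Module.finrank_pos]
  rw [Algebra.norm_eq_norm_adjoin, hgen, hrank, mul_pow, ← pow_mul,
    Nat.mul_div_cancel' (minpoly.degree_dvd hx), fieldCharpoly, eval_pow, coeff_zero_eq_eval_zero]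

theorem norm_algebraMap_sub (x : K) (a : F) :
    Algebra.norm F (algebraMap F K a - x) = (fieldCharpoly F x).eval a := by
  have hcomp : fieldCharpoly F (x - algebraMap F K a) = (fieldCharpoly F x).comp (X + C a) := by
    rw [fieldCharpoly, fieldCharpoly, minpoly.sub_algebraMap, natDegree_comp, natDegree_X_add_C,
      mul_one, pow_comp]
  have hneg : algebraMap F K a - x = algebraMap F K (-1) * (x - algebraMap F K a) := by
    simp only [map_neg, map_one, neg_mul, one_mul, neg_sub]
  rw [hneg, map_mul, Algebra.norm_algebraMap, norm_eq_eval_zero_fieldCharpoly, hcomp, ← mul_assoc,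
    ← mul_pow, eval_comp]
  simp only [mul_neg, mul_one, neg_neg, one_pow, one_mul, eval_add, eval_X, eval_C, zero_add]

end FiniteDimensional

section Finite

variable [Fintype K]

theorem card_filter_minpoly_eq [DecidableEq F[X]] {P : F[X]} (hP : P.Monic)
    (hPi : Irreducible P) (hdvd : P.natDegree ∣ Module.finrank F K) :
    (Finset.univ.filter fun x : K => minpoly F x = P).card = P.natDegree := by
  classical
  have := Fact.mk hPi
  have hrank : Module.finrank F (AdjoinRoot P) = P.natDegree := by
    rw [(AdjoinRoot.powerBasis hPi.ne_zero).finrank, AdjoinRoot.powerBasis_dim]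
  have hcard := FiniteField.natCard_algHom_of_finrank_dvd (F := F) (K := AdjoinRoot P) (L := K)
    (by rwa [hrank])
  rw [hrank, Nat.card_congr (AdjoinRoot.equiv K F P hPi.ne_zero)] at hcard
  rw [← hcard, eq_comm]
  refine Nat.subtype_card _ fun x => ?_
  rw [Finset.mem_filter, mem_aroots, and_iff_right (Finset.mem_univ x),
    and_iff_right hPi.ne_zero]
  constructor
  · rintro rfl
    exact minpoly.aeval F x
  · exact fun hx => (minpoly.eq_of_irreducible_of_monic hPi hx hP).symm

variable [Finite F]

theorem card_filter_fieldCharpoly_eq [DecidableEq F[X]] {g : F[X]}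
    (hg : g ∈ monicFinset F (Module.finrank F K)) :
    (Finset.univ.filter fun x : K => fieldCharpoly F x = g).card = vonMangoldtDegree g := by
  have : Module.Finite F K := .of_finite
  obtain ⟨hm, hdeg⟩ := mem_monicFinset.1 hg
  by_cases hpow : IsPrimePow g
  · obtain ⟨P, hP, hPm, n, hn, rfl⟩ := exists_irreducible_monic_pow_eq_of_isPrimePow hm hpow
    rw [natDegree_pow] at hdeg
    rw [vonMangoldtDegree_pow hP hPm hn,
      ← card_filter_minpoly_eq hPm hP (Dvd.intro_left n hdeg)]
    refine congrArg _ (Finset.filter_congr fun x _ => ?_)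
    have hx : IsIntegral F x := .of_finite F x
    rw [fieldCharpoly, pow_eq_pow_iff_of_irreducible_of_monic (minpoly.irreducible hx)
      (minpoly.monic hx) hP hPm (finrank_div_natDegree_minpoly_ne_zero x) hn, and_iff_left_iff_imp]
    rintro rfl
    rw [← hdeg, Nat.mul_div_cancel _ hP.natDegree_pos]
  · rw [vonMangoldtDegree, if_neg hpow, Finset.card_eq_zero, Finset.filter_eq_empty_iff]
    rintro x - rfl
    exact hpow ((minpoly.irreducible (.of_finite F x)).prime.isPrimePow.pow
      (finrank_div_natDegree_minpoly_ne_zero x))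

theorem sum_fieldCharpoly {R : Type*} [NonAssocSemiring R] (Λ : F[X] → R) :
    ∑ x : K, Λ (fieldCharpoly F x) =
      ∑ g ∈ monicFinset F (Module.finrank F K), vonMangoldtDegree g * Λ g := by
  classical
  have : Module.Finite F K := .of_finite
  rw [← Finset.sum_fiberwise_of_maps_to (g := fieldCharpoly F) fun x _ =>
    mem_monicFinset.2 ⟨fieldCharpoly_monic x, natDegree_fieldCharpoly x⟩]
  refine Finset.sum_congr rfl fun g hg => ?_
  rw [← card_filter_fieldCharpoly_eq hg, ← nsmul_eq_mul, ← Finset.sum_const]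
  exact Finset.sum_congr rfl fun x hx => by rw [(Finset.mem_filter.1 hx).2]

end Finite

end FieldCharpoly

section EvalMulChar

variable {F R ι : Type*} [Field F] [CommRing R] [Fintype ι]

/-- The multiplicative function `h ↦ ∏ i, χ i (h (a i))` on polynomials: the analogue over `F[X]`
of a Dirichlet character of modulus `∏ i, (X - a i)`. -/
noncomputable def evalMulChar (χ : ι → MulChar F R) (a : ι → F) : F[X] →* R where
  toFun h := ∏ i, χ i (h.eval (a i))
  map_one' := by simp only [eval_one, map_one, Finset.prod_const_one]
  map_mul' g h := by simp only [eval_mul, map_mul, Finset.prod_mul_distrib]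

theorem evalMulChar_apply (χ : ι → MulChar F R) (a : ι → F) (h : F[X]) :
    evalMulChar χ a h = ∏ i, χ i (h.eval (a i)) := rfl

theorem evalMulChar_fieldCharpoly {K : Type*} [Field K] [Algebra F K] [FiniteDimensional F K]
    (χ : ι → MulChar F R) (a : ι → F) (x : K) :
    evalMulChar χ a (fieldCharpoly F x) =
      ∏ i, χ i (Algebra.norm F (algebraMap F K (a i) - x)) := by
  simp only [evalMulChar_apply, norm_algebraMap_sub]

theorem add_C_mul_mem_monicFinset [Finite F] {n : ℕ} {h w : F[X]} (hh : h ∈ monicFinset F n)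
    (hw : w.natDegree < n) (c : F) : h + C c * w ∈ monicFinset F n := by
  obtain ⟨hm, hdeg⟩ := mem_monicFinset.1 hh
  have hlt : (C c * w).degree < h.degree := by
    rw [degree_eq_natDegree hm.ne_zero, hdeg]
    exact degree_le_natDegree.trans_lt (mod_cast (natDegree_C_mul_le c w).trans_lt hw)
  exact mem_monicFinset.2
    ⟨hm.add_of_left hlt, by rw [natDegree_add_eq_left_of_degree_lt hlt, hdeg]⟩

theorem exists_natDegree_lt_forall_eval_eq_zero_iff (a : ι → F) (ha : a.Injective) (i₀ : ι) :
    ∃ w : F[X], w.natDegree < Fintype.card ι ∧ ∀ i, w.eval (a i) = 0 ↔ i ≠ i₀ := by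
  classical
  refine ⟨∏ i ∈ Finset.univ.erase i₀, (X - C (a i)), ?_, fun i => ?_⟩
  · rw [natDegree_finsetProd_X_sub_C_eq_card, Finset.card_erase_of_mem (Finset.mem_univ i₀)]
    exact Nat.pred_lt (Finset.card_pos.2 ⟨i₀, Finset.mem_univ i₀⟩).ne'
  · simp only [eval_prod, eval_sub, eval_X, eval_C, Finset.prod_eq_zero_iff, Finset.mem_erase,
      Finset.mem_univ, and_true, sub_eq_zero, ha.eq_iff, exists_eq_right']

theorem sum_evalMulChar_add_C_mul_eq_zero [Fintype F] [IsDomain R] {χ : ι → MulChar F R}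
    {a : ι → F} {i₀ : ι} (hχ : χ i₀ ≠ 1) {w : F[X]} (hw : ∀ i, w.eval (a i) = 0 ↔ i ≠ i₀)
    (h : F[X]) : ∑ c : F, evalMulChar χ a (h + C c * w) = 0 := by
  classical
  have hw₀ : w.eval (a i₀) ≠ 0 := fun h₀ => (hw i₀).1 h₀ rfl
  calc ∑ c : F, evalMulChar χ a (h + C c * w)
      = ∑ c : F, χ i₀ (h.eval (a i₀) + c * w.eval (a i₀)) *
          ∏ i ∈ Finset.univ.erase i₀, χ i (h.eval (a i)) := by
        refine Finset.sum_congr rfl fun c _ => ?_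
        rw [evalMulChar_apply, ← Finset.mul_prod_erase _ _ (Finset.mem_univ i₀)]
        simp only [eval_add, eval_mul, eval_C]
        refine congrArg _ (Finset.prod_congr rfl fun i hi => ?_)
        rw [(hw i).2 (Finset.ne_of_mem_erase hi), mul_zero, add_zero]
    _ = (∑ y, χ i₀ y) * ∏ i ∈ Finset.univ.erase i₀, χ i (h.eval (a i)) := by
        rw [← Finset.sum_mul, ← ((Equiv.mulRight₀ _ hw₀).trans
          (Equiv.addLeft (h.eval (a i₀)))).sum_comp fun y => χ i₀ y]
        rfl
    _ = 0 := by rw [MulChar.sum_eq_zero_of_ne_one hχ, zero_mul]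

theorem sum_monicFinset_evalMulChar_eq_zero [Finite F] [IsDomain R] [CharZero R]
    {χ : ι → MulChar F R} {a : ι → F} (ha : a.Injective) {i₀ : ι} (hχ : χ i₀ ≠ 1) {n : ℕ}
    (hn : Fintype.card ι ≤ n) : ∑ h ∈ monicFinset F n, evalMulChar χ a h = 0 := by
  have : Fintype F := Fintype.ofFinite F
  obtain ⟨w, hwdeg, hw⟩ := exists_natDegree_lt_forall_eval_eq_zero_iff a ha i₀
  have hshift (c : F) : ∑ h ∈ monicFinset F n, evalMulChar χ a (h + C c * w) =
      ∑ h ∈ monicFinset F n, evalMulChar χ a h :=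
    Finset.sum_bij' (fun h _ => h + C c * w) (fun h _ => h + C (-c) * w)
      (fun h hh => add_C_mul_mem_monicFinset hh (hwdeg.trans_le hn) c)
      (fun h hh => add_C_mul_mem_monicFinset hh (hwdeg.trans_le hn) (-c))
      (fun h _ => by simp only [C_neg, neg_mul, add_neg_cancel_right])
      (fun h _ => by simp only [C_neg, neg_mul, neg_add_cancel_right]) fun _ _ => rfl
  have hcard : (Fintype.card F : R) * ∑ h ∈ monicFinset F n, evalMulChar χ a h = 0 := by
    rw [← nsmul_eq_mul, ← Finset.card_univ, ← Finset.sum_const,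
      ← Finset.sum_congr rfl fun c _ => hshift c, Finset.sum_comm]
    exact Finset.sum_eq_zero fun h _ => sum_evalMulChar_add_C_mul_eq_zero hχ hw h
  exact (mul_eq_zero.1 hcard).resolve_left (Nat.cast_ne_zero.2 Fintype.card_ne_zero)

end EvalMulChar

section PowerSums

open Finset.HasAntidiagonal (antidiagonal mem_antidiagonal)

theorem eq_of_natCast_mul_eq_sum_antidiagonal {R : Type*} [CommRing R] [IsDomain R]
    {c S T : ℕ → R} (hc : c 0 ≠ 0)
    (hS : ∀ n : ℕ, n * c n = ∑ p ∈ antidiagonal n, c p.1 * S p.2)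
    (hT : ∀ n : ℕ, n * c n = ∑ p ∈ antidiagonal n, c p.1 * T p.2) : S = T := by
  have hne : PowerSeries.mk c ≠ 0 := fun h =>
    hc (by simpa only [PowerSeries.coeff_mk, map_zero] using congrArg (PowerSeries.coeff 0) h)
  have hmul : PowerSeries.mk c * PowerSeries.mk S = PowerSeries.mk c * PowerSeries.mk T := by
    ext n
    simp only [PowerSeries.coeff_mul, PowerSeries.coeff_mk, ← hS, ← hT]
  funext n
  simpa only [PowerSeries.coeff_mk] using
    congrArg (PowerSeries.coeff n) (mul_left_cancel₀ hne hmul)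

theorem natCast_mul_neg_one_pow_mul_esymm {R : Type*} [CommRing R] (α : Multiset R) (n : ℕ) :
    n * ((-1) ^ n * α.esymm n) = ∑ p ∈ antidiagonal n,
      (-1) ^ p.1 * α.esymm p.1 * if p.2 = 0 then 0 else -(α.map (· ^ p.2)).sum := by
  classical
  have hesymm (m : ℕ) : MvPolynomial.aeval (fun x : α => (x : R)) (MvPolynomial.esymm α R m) =
      α.esymm m := by
    rw [MvPolynomial.aeval_esymm_eq_multiset_esymm, Multiset.map_univ_coe]
  have hpsum (m : ℕ) : MvPolynomial.aeval (fun x : α => (x : R)) (MvPolynomial.psum α R m) =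
      (α.map (· ^ m)).sum := by
    simp only [MvPolynomial.psum, map_sum, map_pow, MvPolynomial.aeval_X]
    exact congrArg Multiset.sum (Multiset.map_univ α (· ^ m))
  have newton := congrArg (MvPolynomial.aeval fun x : α => (x : R))
    (MvPolynomial.mul_esymm_eq_sum α R n)
  simp only [map_mul, map_natCast, map_pow, map_neg, map_one, map_sum, hesymm, hpsum] at newton
  rw [mul_left_comm, newton, ← mul_assoc, ← pow_add, Odd.neg_one_pow ⟨n, by ring⟩, neg_one_mul,
    ← Finset.sum_neg_distrib, Finset.sum_filter]
  refine Finset.sum_congr rfl fun p hp => ?_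
  have hlt : p.1 < n ↔ p.2 ≠ 0 := by have := mem_antidiagonal.1 hp; omega
  by_cases h : p.2 = 0
  · rw [if_neg (fun h' => hlt.1 h' h), if_pos h, mul_zero]
  · rw [if_pos (hlt.2 h), if_neg h, mul_neg]

theorem exists_multiset_esymm_eq {𝕜 : Type*} [Field 𝕜] [IsAlgClosed 𝕜] {c : ℕ → 𝕜} {k : ℕ}
    (hc : c 0 = 1) (hk : ∀ n, k < n → c n = 0) :
    ∃ α : Multiset 𝕜, α.card = k ∧ ∀ n, (-1) ^ n * α.esymm n = c n := by
  set P : 𝕜[X] := ∑ i ∈ Finset.range (k + 1), C (c (k - i)) * X ^ i with hP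
  have hcoeff {i : ℕ} (hi : i ≤ k) : P.coeff i = c (k - i) := by
    simp only [hP, finsetSum_coeff, coeff_C_mul_X_pow, Finset.sum_ite_eq,
      if_pos (Finset.mem_range_succ_iff.2 hi)]
  have hle : P.natDegree ≤ k := natDegree_sum_le_of_forall_le _ _ fun i hi =>
    (natDegree_C_mul_X_pow_le _ _).trans (Finset.mem_range_succ_iff.1 hi)
  have hlead : P.coeff k = 1 := by rw [hcoeff le_rfl, Nat.sub_self, hc]
  have hdeg : P.natDegree = k := natDegree_eq_of_le_of_coeff_ne_zero hle (hlead ▸ one_ne_zero)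
  have hcard : P.roots.card = P.natDegree := (IsAlgClosed.splits P).natDegree_eq_card_roots.symm
  refine ⟨P.roots, hcard.trans hdeg, fun n => ?_⟩
  rcases le_or_gt n k with hn | hn
  · have vieta := coeff_eq_esymm_roots_of_card (k := k - n) hcard (hdeg.symm ▸ Nat.sub_le k n)
    rwa [hcoeff (Nat.sub_le k n), leadingCoeff, hdeg, hlead, one_mul, Nat.sub_sub_self hn,
      eq_comm] at vieta
  · rw [hk n hn, Multiset.esymm, Multiset.powersetCard_eq_empty _ (by rwa [hcard, hdeg]),
      Multiset.map_zero, Multiset.sum_zero, mul_zero]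

theorem exists_multiset_forall_eq_neg_sum_pow {𝕜 : Type*} [Field 𝕜] [IsAlgClosed 𝕜]
    {c S : ℕ → 𝕜} {k : ℕ} (hc : c 0 = 1) (hk : ∀ n, k < n → c n = 0)
    (hS : ∀ n : ℕ, n * c n = ∑ p ∈ antidiagonal n, c p.1 * S p.2) :
    ∃ α : Multiset 𝕜, α.card = k ∧ ∀ r ≠ 0, S r = -(α.map (· ^ r)).sum := by
  obtain ⟨α, hα, hesymm⟩ := exists_multiset_esymm_eq hc hk
  have newton := natCast_mul_neg_one_pow_mul_esymm α
  simp only [hesymm] at newton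
  refine ⟨α, hα, fun r hr => ?_⟩
  have hST := eq_of_natCast_mul_eq_sum_antidiagonal (hc.symm ▸ one_ne_zero) hS
    (T := fun r => if r = 0 then 0 else -(α.map (· ^ r)).sum) newton
  exact (congrFun hST r).trans (if_neg hr)

-- Lagrange interpolation at the elements of `β` isolates the powers of a single `b`.
theorem norm_le_of_sum_pow_isBigO {𝕜 : Type*} [NormedField 𝕜] [CharZero 𝕜] {β : Multiset 𝕜}
    {ρ : ℝ} (hρ : 0 ≤ ρ) (hβ : (fun t : ℕ => (β.map (· ^ t)).sum) =O[atTop] (ρ ^ · : ℕ → ℝ))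
    {b : 𝕜} (hb : b ∈ β) : ‖b‖ ≤ ρ := by
  classical
  set Q := Lagrange.basis β.toFinset id b
  have hbs := Multiset.mem_toFinset.2 hb
  have isolate (t : ℕ) : ∑ j ∈ Finset.range (Q.natDegree + 1),
      Q.coeff j * (β.map (· ^ (t + j))).sum = β.count b * b ^ t := by
    calc ∑ j ∈ Finset.range (Q.natDegree + 1), Q.coeff j * (β.map (· ^ (t + j))).sum
        = ∑ x ∈ β.toFinset, β.count x * x ^ t * Q.eval x := by
          simp only [Finset.sum_multiset_map_count, nsmul_eq_mul, eval_eq_sum_range,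
            Finset.mul_sum]
          rw [Finset.sum_comm]
          exact Finset.sum_congr rfl fun x _ => Finset.sum_congr rfl fun j _ => by ring
      _ = β.count b * b ^ t := by
          have hself : Q.eval b = 1 := Lagrange.eval_basis_self (Set.injOn_id _) hbs
          have hother {x} (hx : x ∈ β.toFinset) (hne : x ≠ b) : Q.eval x = 0 :=
            Lagrange.eval_basis_of_ne (v := id) hne.symm hx
          rw [Finset.sum_eq_single_of_mem b hbs fun x hx hne => by rw [hother hx hne, mul_zero],
            hself, mul_one]
  have hcount : (β.count b : 𝕜) ≠ 0 := Nat.cast_ne_zero.2 (Multiset.count_pos.2 hb).ne'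
  have hpow : (b ^ · : ℕ → 𝕜) =O[atTop] (ρ ^ · : ℕ → ℝ) := by
    rw [← Asymptotics.isBigO_const_mul_left_iff hcount]
    simp only [← isolate]
    refine Asymptotics.IsBigO.fun_sum fun j _ => .const_mul_left ?_ _
    refine (hβ.comp_tendsto (tendsto_add_atTop_nat j)).trans ?_
    simp only [Function.comp_def, pow_add, mul_comm _ (ρ ^ j)]
    exact Asymptotics.isBigO_const_mul_self _ _ _
  by_contra! hlt
  have hnorm : (‖b‖ ^ · : ℕ → ℝ) =O[atTop] (ρ ^ · : ℕ → ℝ) := by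
    simpa only [norm_pow] using hpow.norm_left
  refine Asymptotics.isLittleO_irrefl (Frequently.of_forall fun t => ?_)
    (hnorm.trans_isLittleO (isLittleO_pow_pow_of_lt_left hρ hlt))
  exact pow_ne_zero t (hρ.trans_lt hlt).ne'

theorem norm_le_mul_sqrt_of_isBigO {c S : ℕ → ℂ} {k : ℕ} (hc : c 0 = 1)
    (hk : ∀ n, k < n → c n = 0) (hS : ∀ n : ℕ, n * c n = ∑ p ∈ antidiagonal n, c p.1 * S p.2)
    {ρ : ℝ} (hρ : 0 ≤ ρ) (hO : (fun t => S (2 * t)) =O[atTop] (ρ ^ · : ℕ → ℝ)) :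
    ‖S 1‖ ≤ k * √ρ := by
  obtain ⟨α, hα, hSα⟩ := exists_multiset_forall_eq_neg_sum_pow hc hk hS
  have hsq : (fun t : ℕ => ((α.map (· ^ 2)).map (· ^ t)).sum) =O[atTop] (ρ ^ · : ℕ → ℝ) := by
    refine hO.neg_left.congr' ?_ .rfl
    filter_upwards [eventually_ne_atTop 0] with t ht
    simp only [hSα (2 * t) (mul_ne_zero two_ne_zero ht), neg_neg, Multiset.map_map,
      Function.comp_def, pow_mul]
  have hroot : ∀ x ∈ α, ‖x‖ ≤ √ρ := fun x hx => Real.le_sqrt_of_sq_le <| by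
    rw [← norm_pow]
    exact norm_le_of_sum_pow_isBigO hρ hsq (Multiset.mem_map_of_mem _ hx)
  calc ‖S 1‖ = ‖α.sum‖ := by simp only [hSα 1 one_ne_zero, norm_neg, pow_one, Multiset.map_id']
    _ ≤ (α.map (‖·‖)).sum := norm_multiset_sum_le α
    _ ≤ k * √ρ := by
      rw [← hα, ← nsmul_eq_mul, ← Multiset.card_map (‖·‖) α]
      exact Multiset.sum_le_card_nsmul _ _ (by simpa only [Multiset.forall_mem_map_iff] using hroot)

end PowerSums

section WeilBound

variable {ι : Type*} [Fintype ι]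

theorem rootMultiplicity_prod_X_sub_C_pow {R : Type*} [CommRing R] [IsDomain R] {a : ι → R}
    (ha : a.Injective) (e : ι → ℕ) (i₀ : ι) :
    (∏ i, (X - C (a i)) ^ e i).rootMultiplicity (a i₀) = e i₀ := by
  classical
  have hne : ∏ i, (X - C (a i)) ^ e i ≠ 0 :=
    (monic_prod_of_monic _ _ fun i _ => (monic_X_sub_C (a i)).pow (e i)).ne_zero
  rw [← count_roots, roots_prod _ _ hne, Multiset.count_bind]
  simp only [roots_pow, roots_X_sub_C, Multiset.count_nsmul, Multiset.count_singleton, ha.eq_iff,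
    mul_ite, mul_one, mul_zero]
  exact Finset.sum_ite_eq _ _ _ |>.trans (if_pos (Finset.mem_univ i₀))

theorem natDegree_prod_X_sub_C_pow {R : Type*} [CommRing R] [Nontrivial R] (a : ι → R)
    (e : ι → ℕ) : (∏ i, (X - C (a i)) ^ e i).natDegree = ∑ i, e i := by
  rw [natDegree_prod_of_monic _ _ fun i _ => (monic_X_sub_C (a i)).pow (e i)]
  simp only [(monic_X_sub_C _).natDegree_pow, natDegree_X_sub_C, mul_one]

theorem norm_sum_prod_mulChar_pow_le_of_card_eq_sq {K : Type*} [Field K] [Fintype K]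
    {ψ : MulChar K ℂ} (hψ : ψ ≠ 1) {a : ι → K} (ha : a.Injective) {e : ι → ℕ} {i₀ : ι}
    (hcop : (orderOf ψ).Coprime (e i₀)) {s : ℕ} (hK : Fintype.card K = s ^ 2)
    (hs : 4 * (orderOf ψ * (orderOf ψ * ∑ i, (e i + orderOf ψ) + 1)) ≤ s) :
    ‖∑ x, ∏ i, (ψ ^ e i) (a i - x)‖ ≤
      4 * (orderOf ψ * (orderOf ψ * ∑ i, (e i + orderOf ψ) + 1) : ℕ) * s := by
  set f : K[X] := ∏ i, (X - C (-a i)) ^ (e i + orderOf ψ) with hf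
  have hdeg : f.natDegree = ∑ i, (e i + orderOf ψ) := natDegree_prod_X_sub_C_pow _ _
  have hne : f ≠ 0 :=
    (monic_prod_of_monic _ _ fun i _ => (monic_X_sub_C (-a i)).pow _).ne_zero
  have hmult : f.rootMultiplicity (-a i₀) = e i₀ + orderOf ψ :=
    rootMultiplicity_prod_X_sub_C_pow (neg_injective.comp ha) _ i₀
  -- Raising each exponent by `orderOf ψ` makes it positive, so that `ψ ^ e` is a pointwise power.
  have hpow (i : ι) (y : K) : (ψ ^ e i) y = ψ (y ^ (e i + orderOf ψ)) := by
    rw [map_pow, ← MulChar.pow_apply' ψ (Nat.add_pos_right _ ψ.orderOf_pos).ne', pow_add,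
      pow_orderOf_eq_one, mul_one]
  have hsum : ∑ x, ∏ i, (ψ ^ e i) (a i - x) = ∑ x, ψ (f.eval x) := by
    rw [← Equiv.sum_comp (Equiv.neg K)]
    simp only [hf, hpow, eval_prod, eval_pow, eval_sub, eval_X, eval_C, map_prod, Equiv.neg_apply,
      sub_neg_eq_add, add_comm]
  rw [hsum, ← hdeg]
  exact mod_cast norm_sum_mulChar_eval_le hψ hne (-a i₀)
    (by rwa [hmult, Nat.coprime_add_self_right]) hK (hdeg.symm ▸ hs)

section CompNorm

variable {F R : Type*} (K : Type*) [Field F] [Field K] [Algebra F K] [FiniteDimensional F K]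
  [CommRing R]

/-- The homomorphism `χ ↦ χ ∘ N` from the characters of `F` to those of an extension `K`, where
`N` is the norm. -/
noncomputable def compNorm : MulChar F R →* MulChar K R where
  toFun χ :=
    { toMonoidHom := χ.toMonoidHom.comp (Algebra.norm F)
      map_nonunit' := fun _ hy => χ.map_nonunit fun h => hy <|
        isUnit_iff_ne_zero.2 <| (Algebra.norm_ne_zero_iff (R := F)).1 h.ne_zero }
  map_one' := MulChar.ext fun y =>
    (MulChar.one_apply (y.isUnit.map (Algebra.norm F))).trans (MulChar.one_apply_coe y).symm
  map_mul' _ _ := MulChar.ext fun _ => rfl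

variable {K}

theorem compNorm_apply (χ : MulChar F R) (y : K) :
    compNorm K χ y = χ (Algebra.norm F y) := rfl

theorem orderOf_compNorm [Finite K] (χ : MulChar F R) : orderOf (compNorm K χ) = orderOf χ := by
  refine orderOf_injective (compNorm K) (fun χ χ' h => MulChar.ext' fun y => ?_) χ
  obtain ⟨x, rfl⟩ := FiniteField.norm_surjective F K y
  exact DFunLike.congr_fun h x

end CompNorm

variable {F : Type*} [Field F] [Fintype F]

theorem norm_sum_prod_mulChar_le_of_isBigO {χ : ι → MulChar F ℂ} {a : ι → F} (ha : a.Injective)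
    {i₀ : ι} (hχ : χ i₀ ≠ 1) {ρ : ℝ} (hρ : 0 ≤ ρ)
    (hO : (fun t => ∑ g ∈ monicFinset F (2 * t), vonMangoldtDegree g * evalMulChar χ a g)
      =O[atTop] (ρ ^ · : ℕ → ℝ)) :
    ‖∑ x, ∏ i, χ i (a i - x)‖ ≤ (Fintype.card ι - 1 : ℕ) * √ρ := by
  have hsum : ∑ g ∈ monicFinset F 1, vonMangoldtDegree g * evalMulChar χ a g =
      ∑ x, ∏ i, χ i (a i - x) := by
    rw [← Module.finrank_self F, ← sum_fieldCharpoly (K := F)]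
    simp only [evalMulChar_fieldCharpoly, Algebra.norm_self, MonoidHom.id_apply,
      Algebra.algebraMap_self_apply]
  rw [← hsum]
  refine norm_le_mul_sqrt_of_isBigO (c := fun n => ∑ h ∈ monicFinset F n, evalMulChar χ a h)
    (S := fun n => ∑ g ∈ monicFinset F n, vonMangoldtDegree g * evalMulChar χ a g)
    ?_ (fun n hn => ?_) (natCast_mul_sum_monicFinset _) hρ hO
  · simp only [monicFinset_zero, Finset.sum_singleton, map_one]
  · exact sum_monicFinset_evalMulChar_eq_zero ha hχ (by omega)

theorem sum_vonMangoldtDegree_evalMulChar_pow_isBigO {χ : MulChar F ℂ} (hχ : χ ≠ 1) {a : ι → F}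
    (ha : a.Injective) {e : ι → ℕ} {i₀ : ι} (hcop : (orderOf χ).Coprime (e i₀)) :
    (fun t => ∑ g ∈ monicFinset F (2 * t),
      vonMangoldtDegree g * evalMulChar (fun i => χ ^ e i) a g)
      =O[atTop] ((Fintype.card F : ℝ) ^ · : ℕ → ℝ) := by
  obtain ⟨p, _⟩ := CharP.exists F
  have : Fact p.Prime := ⟨CharP.char_is_prime F p⟩
  set B := 4 * (orderOf χ * (orderOf χ * ∑ i, (e i + orderOf χ) + 1))
  have hlarge : ∀ᶠ t in atTop, B ≤ Fintype.card F ^ t :=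
    (tendsto_pow_atTop_atTop_of_one_lt Fintype.one_lt_card).eventually_ge_atTop B
  refine IsBigO.of_bound B ?_
  filter_upwards [hlarge, eventually_ne_atTop 0] with t hB ht
  have : NeZero (2 * t) := ⟨mul_ne_zero two_ne_zero ht⟩
  let K := FiniteField.Extension F p (2 * t)
  have : Fintype K := Fintype.ofFinite K
  have hrank : Module.finrank F K = 2 * t := FiniteField.finrank_extension F p (2 * t)
  have hcard : Fintype.card K = (Fintype.card F ^ t) ^ 2 := by
    rw [Module.card_eq_pow_finrank (K := F), hrank, ← pow_mul, mul_comm]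
  have hord : orderOf (compNorm K χ) = orderOf χ := orderOf_compNorm χ
  have hne : compNorm K χ ≠ 1 := by rwa [Ne, ← orderOf_eq_one_iff, hord, orderOf_eq_one_iff]
  have hsum : ∑ g ∈ monicFinset F (2 * t),
      vonMangoldtDegree g * evalMulChar (fun i => χ ^ e i) a g =
        ∑ x : K, ∏ i, (compNorm K χ ^ e i) (algebraMap F K (a i) - x) := by
    simp only [← hrank, ← sum_fieldCharpoly, evalMulChar_fieldCharpoly, ← map_pow, compNorm_apply]
  have hle := norm_sum_prod_mulChar_pow_le_of_card_eq_sq hne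
    ((algebraMap F K).injective.comp ha) (hord.symm ▸ hcop) hcard (by rwa [hord])
  rw [hsum, Real.norm_of_nonneg (by positivity)]
  simpa only [hord, B, Nat.cast_mul, Nat.cast_pow, Nat.cast_ofNat, Function.comp_apply] using hle

theorem norm_sum_prod_mulChar_pow_le {χ : MulChar F ℂ} (hχ : χ ≠ 1) {a : ι → F}
    (ha : a.Injective) {e : ι → ℕ} {i₀ : ι} (hcop : (orderOf χ).Coprime (e i₀)) :
    ‖∑ x, ∏ i, (χ ^ e i) (a i - x)‖ ≤ (Fintype.card ι - 1 : ℕ) * √(Fintype.card F) := by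
  refine norm_sum_prod_mulChar_le_of_isBigO ha (χ := fun i => χ ^ e i) (i₀ := i₀) (fun h => hχ ?_)
    (Nat.cast_nonneg _) (sum_vonMangoldtDegree_evalMulChar_pow_isBigO hχ ha hcop)
  rw [← orderOf_eq_one_iff]
  exact Nat.eq_one_of_dvd_coprimes hcop dvd_rfl (orderOf_dvd_of_pow_eq_one h)

end WeilBound

section Covering

variable {ι : Type*} [Fintype ι]

/-- The coefficient of `χ ^ j`, for `j < ℓ`, in `ℓ • 1 - ∑ j < ℓ, χ ^ j`. If `χ` has order `ℓ`,
this function is supported on the nonzero elements outside the kernel of `χ`. -/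
def offKernelCoeff (ℓ j : ℕ) : ℂ := if j = 0 then ℓ - 1 else -1

theorem sum_offKernelCoeff {ℓ : ℕ} (hℓ : ℓ ≠ 0) :
    ∑ j ∈ Finset.range ℓ, offKernelCoeff ℓ j = 0 := by
  obtain ⟨N, rfl⟩ := Nat.exists_eq_succ_of_ne_zero hℓ
  simp [Finset.sum_range_succ', offKernelCoeff]

theorem sum_norm_offKernelCoeff {ℓ : ℕ} (hℓ : ℓ ≠ 0) :
    ∑ j ∈ Finset.range ℓ, ‖offKernelCoeff ℓ j‖ = 2 * (ℓ - 1 : ℝ) := by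
  obtain ⟨N, rfl⟩ := Nat.exists_eq_succ_of_ne_zero hℓ
  simp [Finset.sum_range_succ', offKernelCoeff, two_mul]

theorem sum_offKernelCoeff_mul_mulChar_pow_eq_zero {R : Type*} [CommMonoidWithZero R]
    [Nontrivial R] (χ : MulChar R ℂ) {z : R} (hz : z = 0 ∨ χ z = 1) {ℓ : ℕ} (hℓ : ℓ ≠ 0) :
    ∑ j ∈ Finset.range ℓ, offKernelCoeff ℓ j * (χ ^ j) z = 0 := by
  rcases hz with rfl | hz
  · exact Finset.sum_eq_zero fun j _ => by rw [MulChar.map_zero, mul_zero]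
  · have hunit : IsUnit z := by
      by_contra h
      exact one_ne_zero (hz.symm.trans (χ.map_nonunit h))
    obtain ⟨u, rfl⟩ := hunit
    simpa only [MulChar.pow_apply_coe, hz, one_pow, mul_one] using sum_offKernelCoeff hℓ

theorem norm_sum_erase_piFinset_prod_mul_le {κ : Type*} [DecidableEq ι] [DecidableEq κ]
    (s : Finset κ) (w : κ → ℂ) {g : (ι → κ) → ℂ} {e₀ : ι → κ} {M : ℝ} (hM : 0 ≤ M)
    (hg : ∀ e ∈ Fintype.piFinset fun _ => s, e ≠ e₀ → ‖g e‖ ≤ M) :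
    ‖∑ e ∈ (Fintype.piFinset fun _ => s).erase e₀, (∏ i, w (e i)) * g e‖ ≤
      (∑ j ∈ s, ‖w j‖) ^ Fintype.card ι * M := by
  calc ‖∑ e ∈ (Fintype.piFinset fun _ => s).erase e₀, (∏ i, w (e i)) * g e‖
      ≤ ∑ e ∈ (Fintype.piFinset fun _ => s).erase e₀, (∏ i, ‖w (e i)‖) * M := by
        refine norm_sum_le_of_le _ fun e he => ?_
        rw [norm_mul, norm_prod]
        gcongr
        exact hg e (Finset.mem_of_mem_erase he) (Finset.ne_of_mem_erase he)
    _ ≤ ∑ e ∈ Fintype.piFinset fun _ => s, (∏ i, ‖w (e i)‖) * M :=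
        Finset.sum_le_sum_of_subset_of_nonneg (Finset.erase_subset _ _) fun _ _ _ => by positivity
    _ = (∑ j ∈ s, ‖w j‖) ^ Fintype.card ι * M := by
        rw [← Finset.sum_mul, ← Finset.prod_univ_sum (fun _ => s) fun _ j => ‖w j‖,
          Finset.prod_const, Finset.card_univ]

variable {F : Type*} [Field F] [Fintype F]

theorem sum_prod_one_mulChar_sub {R : Type*} [CommRing R] {a : ι → F} (ha : a.Injective) :
    ∑ x, ∏ i, (1 : MulChar F R) (a i - x) = Fintype.card F - Fintype.card ι := by
  classical
  have hprod (x : F) : ∏ i, (1 : MulChar F R) (a i - x) =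
      if x ∈ Finset.univ.image a then 0 else 1 := by
    split_ifs with hx
    · obtain ⟨i, hi, rfl⟩ := Finset.mem_image.1 hx
      exact Finset.prod_eq_zero hi (by rw [sub_self, MulChar.map_zero])
    · refine Finset.prod_eq_one fun i hi => MulChar.one_apply (isUnit_iff_ne_zero.2 fun h => hx ?_)
      exact Finset.mem_image.2 ⟨i, hi, sub_eq_zero.1 h⟩
  simp only [hprod, Finset.sum_ite, Finset.sum_const_zero, zero_add, Finset.sum_const, nsmul_one]
  rw [← Finset.compl_filter, Finset.filter_univ_mem, Finset.card_compl,
    Finset.card_image_of_injective _ ha, Finset.card_univ,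
    Nat.cast_sub (Fintype.card_le_of_injective a ha)]

theorem norm_sum_prod_sum_offKernelCoeff_sub_le {χ : MulChar F ℂ} (hχ : (orderOf χ).Prime)
    {a : ι → F} (ha : a.Injective) :
    ‖(∑ x, ∏ i, ∑ j ∈ Finset.range (orderOf χ), offKernelCoeff (orderOf χ) j * (χ ^ j) (a i - x)) -
        (orderOf χ - 1) ^ Fintype.card ι * (Fintype.card F - Fintype.card ι)‖ ≤
      (2 * (orderOf χ - 1)) ^ Fintype.card ι * ((Fintype.card ι - 1 : ℕ) * √(Fintype.card F)) := by
  classical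
  set E := Fintype.piFinset fun _ : ι => Finset.range (orderOf χ)
  have hzero : (0 : ι → ℕ) ∈ E :=
    Fintype.mem_piFinset.2 fun _ => Finset.mem_range.2 hχ.pos
  have hexpand : ∑ x, ∏ i, ∑ j ∈ Finset.range (orderOf χ),
      offKernelCoeff (orderOf χ) j * (χ ^ j) (a i - x) =
      ∑ e ∈ E, (∏ i, offKernelCoeff (orderOf χ) (e i)) * ∑ x, ∏ i, (χ ^ e i) (a i - x) := by
    simp only [Finset.prod_univ_sum, Finset.prod_mul_distrib, Finset.mul_sum]
    exact Finset.sum_comm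
  have hprincipal : (∏ i, offKernelCoeff (orderOf χ) ((0 : ι → ℕ) i)) *
      ∑ x, ∏ i, (χ ^ (0 : ι → ℕ) i) (a i - x) =
      (orderOf χ - 1) ^ Fintype.card ι * (Fintype.card F - Fintype.card ι) := by
    simp only [Pi.zero_apply, pow_zero, sum_prod_one_mulChar_sub ha, offKernelCoeff, if_true,
      Finset.prod_const, Finset.card_univ]
  rw [hexpand, ← Finset.add_sum_erase _ _ hzero, hprincipal, add_sub_cancel_left,
    ← sum_norm_offKernelCoeff hχ.ne_zero]
  refine norm_sum_erase_piFinset_prod_mul_le _ _ (by positivity) fun e he hne => ?_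
  obtain ⟨i₀, hi₀⟩ := Function.ne_iff.1 hne
  have hlt := Finset.mem_range.1 (Fintype.mem_piFinset.1 he i₀)
  exact norm_sum_prod_mulChar_pow_le (orderOf_eq_one_iff.not.1 hχ.ne_one) ha
    (Nat.coprime_of_lt_prime hi₀ hlt hχ)

theorem card_le_of_forall_exists_mulChar_eq_one {χ : MulChar F ℂ} (hχ : (orderOf χ).Prime)
    {a : ι → F} (ha : a.Injective) (hcover : ∀ x, ∃ i, x = a i ∨ χ (a i - x) = 1) :
    (Fintype.card F : ℝ) ≤ Fintype.card ι +
      2 ^ Fintype.card ι * ((Fintype.card ι - 1 : ℕ) * √(Fintype.card F)) := by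
  have hN : (0 : ℝ) < orderOf χ - 1 := sub_pos.2 (Nat.one_lt_cast.2 hχ.one_lt)
  have hvanish : ∑ x, ∏ i, ∑ j ∈ Finset.range (orderOf χ),
      offKernelCoeff (orderOf χ) j * (χ ^ j) (a i - x) = 0 := by
    refine Finset.sum_eq_zero fun x _ => ?_
    obtain ⟨i, hi⟩ := hcover x
    exact Finset.prod_eq_zero (Finset.mem_univ i) <|
      sum_offKernelCoeff_mul_mulChar_pow_eq_zero χ (hi.imp_left fun h => sub_eq_zero.2 h.symm)
        hχ.ne_zero
  have hbound := norm_sum_prod_sum_offKernelCoeff_sub_le hχ ha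
  rw [hvanish, zero_sub, norm_neg, mul_pow, mul_comm (2 ^ _), mul_assoc] at hbound
  have hle : (orderOf χ - 1 : ℝ) ^ Fintype.card ι * (Fintype.card F - Fintype.card ι) ≤
      ‖(orderOf χ - 1 : ℂ) ^ Fintype.card ι * (Fintype.card F - Fintype.card ι)‖ := by
    refine le_of_eq_of_le ?_ (Complex.re_le_norm _)
    norm_cast
  exact sub_le_iff_le_add'.1 (le_of_mul_le_mul_left (hle.trans hbound) (pow_pos hN _))

theorem exists_forall_ne_and_mulChar_ne_one {χ : MulChar F ℂ} (hχ : (orderOf χ).Prime) {a : ι → F}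
    (ha : a.Injective) [Nonempty ι]
    (hcard : (2 ^ Fintype.card ι * Fintype.card ι) ^ 2 < Fintype.card F) :
    ∃ x, ∀ i, x ≠ a i ∧ χ (a i - x) ≠ 1 := by
  by_contra! hcover
  have hle := card_le_of_forall_exists_mulChar_eq_one hχ ha
    fun x => (hcover x).imp fun i hi => or_iff_not_imp_left.2 hi
  rw [Nat.cast_sub Fintype.card_pos, Nat.cast_one] at hle
  have hlt : (2 : ℝ) ^ Fintype.card ι * Fintype.card ι < √(Fintype.card F) :=
    Real.lt_sqrt_of_sq_lt (mod_cast hcard)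
  set k : ℝ := ↑(Fintype.card ι)
  set s : ℝ := √↑(Fintype.card F)
  set M : ℝ := 2 ^ Fintype.card ι
  have hM : 1 ≤ M := one_le_pow₀ one_le_two
  have hs : 0 < s := lt_of_le_of_lt (by positivity) hlt
  have hkM : k ≤ M * s :=
    calc k ≤ M * k := le_mul_of_one_le_left (Nat.cast_nonneg _) hM
      _ ≤ s := hlt.le
      _ ≤ M * s := le_mul_of_one_le_left hs.le hM
  refine hle.not_gt ?_
  calc k + M * ((k - 1) * s) ≤ M * s + M * ((k - 1) * s) := by gcongr
    _ = M * k * s := by ring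
    _ < s * s := mul_lt_mul_of_pos_right hlt hs
    _ = Fintype.card F := Real.mul_self_sqrt (Nat.cast_nonneg _)

theorem exists_mulChar_orderOf_prime_forall_eq_one {m : ℕ} (hm : m ∣ Fintype.card F - 1)
    (hne : m ≠ Fintype.card F - 1) :
    ∃ χ : MulChar F ℂ, (orderOf χ).Prime ∧ ∀ b, b ^ m = 1 → χ b = 1 := by
  obtain ⟨d, hd⟩ := hm
  have hd₁ : d ≠ 1 := by
    rintro rfl
    exact hne (hd.trans (mul_one m)).symm
  have hℓ : d.minFac.Prime := Nat.minFac_prime hd₁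
  have hℓd : d.minFac ∣ d := Nat.minFac_dvd d
  have hdvd : d.minFac ∣ Fintype.card F - 1 := hd ▸ hℓd.mul_left m
  obtain ⟨χ, hχ⟩ := MulChar.exists_mulChar_orderOf F hdvd
    (Complex.isPrimitiveRoot_exp d.minFac hℓ.ne_zero)
  have hm₀ : m ≠ 0 := by
    rintro rfl
    exact (Nat.sub_pos_of_lt Fintype.one_lt_card).ne' (hd.trans (zero_mul d))
  refine ⟨χ, hχ ▸ hℓ, fun b hb => ?_⟩
  have hb₀ : b ≠ 0 := fun h => one_ne_zero (hb.symm.trans (by rw [h, zero_pow hm₀]))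
  rw [mulChar_apply_eq_one_iff χ hb₀, hχ, hd, Nat.mul_div_assoc _ hℓd, pow_mul, hb, one_pow]

end Covering

/-- Let `q` be a prime power and `A` a nonempty subset of the finite field with `q`
elements. If `q > (2^{|A|} · |A|)²`, then for every `n` with `1 < n < q` and
`(n-1) ∣ (q-1)`, not every element is the sum of an element of `A` and an `n`-potent. -/
theorem not_sum_of_elem_and_n_potent_of_large
    (q : ℕ) (hq : IsPrimePow q)
    (F : Type*) [Field F] [Fintype F] [DecidableEq F] (hF : Fintype.card F = q)
    (A : Finset F) (hA : A.Nonempty) (hq' : (2 ^ A.card * A.card) ^ 2 < q) :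
    ∀ n : ℕ, 1 < n → n < q → (n - 1) ∣ (q - 1) →
      ¬ (∀ γ : F, ∃ a ∈ A, ∃ b : F, b ^ n = b ∧ a + b = γ) := by
  rintro n hn hnq hdvd hcover
  subst hF
  obtain ⟨χ, hχ, hpotent⟩ := exists_mulChar_orderOf_prime_forall_eq_one hdvd (by omega)
  have : Nonempty A := hA.to_subtype
  obtain ⟨x, hx⟩ := exists_forall_ne_and_mulChar_ne_one hχ (a := fun a : A => -(a : F))
    (neg_injective.comp Subtype.val_injective) (by rwa [Fintype.card_coe])
  obtain ⟨a, ha, b, hb, hab⟩ := hcover (-x)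
  obtain ⟨hxa, hχx⟩ := hx ⟨a, ha⟩
  have hxb : -a - x = b := by linear_combination -hab
  have hb₀ : b ≠ 0 := fun h => hxa (sub_eq_zero.1 (hxb.trans h)).symm
  have hb₁ : b ^ (n - 1) = 1 :=
    mul_right_cancel₀ hb₀ (by rw [pow_sub_one_mul (by omega), hb, one_mul])
  exact hχx (hxb ▸ hpotent b hb₁)
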